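/- Let Y(·) solve Y(t) = y − λ∫₀ᵗ sgn(Y(s)) ds + W(t) under ℙ, and let ℙ⋆ be the reference probability measure under which Y(·) is a standard Brownian motion started at y. Then for every t ∈ [0,∞) the Radon–Nikodým derivative of ℙ with respect to ℙ⋆ on the σ-algebra 𝔉^Y(t) is dℙ/dℙ⋆|_{𝔉^Y(t)} = exp{ λ(|y| − |Y(t)| + 2L^Y(t)) − (λ²/2)t }. -/

import Mathlib

open MeasureTheory ProbabilityTheory Filter Set

noncomputable section

namespace SDEPaper

/-- The signum convention of the paper: `psgn y = 1` for `y > 0`, `= -1` for `y ≤ 0`. -/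
def psgn (y : ℝ) : ℝ := if 0 < y then 1 else -1

variable {Ω : Type*} [m : MeasurableSpace Ω]

/-- The σ-algebra generated by the process `Ξ` on the time interval `[0, t]`. -/
def natSA {E : Type*} [MeasurableSpace E] (Ξ : ℝ → Ω → E) (t : ℝ) : MeasurableSpace Ω :=
  ⨆ s ∈ Icc (0 : ℝ) t, MeasurableSpace.comap (Ξ s) inferInstance

/-- The `μ`-augmentation of a σ-algebra. -/
def augSA (μ : Measure Ω) (m' : MeasurableSpace Ω) : MeasurableSpace Ω :=
  m' ⊔ MeasurableSpace.generateFrom {A : Set Ω | μ A = 0}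

/-- `𝔉^Ξ(t)`: the `μ`-augmented σ-algebra generated by the process `Ξ` up to time `t`. -/
def natFilt {E : Type*} [MeasurableSpace E] (μ : Measure Ω) (Ξ : ℝ → Ω → E) (t : ℝ) :
    MeasurableSpace Ω := augSA μ (natSA Ξ t)

/-- Dyadic left-point Riemann sum of `H` against `X` on `[0,t]`. -/
def rsum (H X : ℝ → Ω → ℝ) (t : ℝ) (n : ℕ) (ω : Ω) : ℝ :=
  ∑ i ∈ Finset.range (2 ^ n),
    H (t * i / 2 ^ n) ω * (X (t * (i + 1) / 2 ^ n) ω - X (t * i / 2 ^ n) ω)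

/-- `I = ∫₀^· H dX`: dyadic Riemann sums converge in probability, and `I 0 = 0` a.s. -/
def IsSI (μ : Measure Ω) (H X I : ℝ → Ω → ℝ) : Prop :=
  (∀ᵐ ω ∂μ, I 0 ω = 0) ∧
  ∀ t : ℝ, 0 ≤ t → TendstoInMeasure μ (fun n => rsum H X t n) atTop (I t)

/-- `I = ∫₀^· H₁ dX₁ + ∫₀^· H₂ dX₂` in the sense of convergence in probability
of dyadic Riemann sums. -/
def IsSI2 (μ : Measure Ω) (H₁ X₁ H₂ X₂ I : ℝ → Ω → ℝ) : Prop :=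
  (∀ᵐ ω ∂μ, I 0 ω = 0) ∧
  ∀ t : ℝ, 0 ≤ t →
    TendstoInMeasure μ (fun n ω => rsum H₁ X₁ t n ω + rsum H₂ X₂ t n ω) atTop (I t)

/-- Dyadic sums of products of increments. -/
def qsum (X Y : ℝ → Ω → ℝ) (t : ℝ) (n : ℕ) (ω : Ω) : ℝ :=
  ∑ i ∈ Finset.range (2 ^ n),
    (X (t * (i + 1) / 2 ^ n) ω - X (t * i / 2 ^ n) ω) *
      (Y (t * (i + 1) / 2 ^ n) ω - Y (t * i / 2 ^ n) ω)

/-- `C = ⟨X,Y⟩`: the quadratic covariation, as a limit in probability of dyadic sums. -/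
def IsQV (μ : Measure Ω) (X Y C : ℝ → Ω → ℝ) : Prop :=
  ∀ t : ℝ, 0 ≤ t → TendstoInMeasure μ (fun n => qsum X Y t n) atTop (C t)

/-- `W` is a standard one-dimensional Brownian motion with respect to the family of
σ-algebras `F` (a filtration contained in the ambient σ-algebra). -/
structure IsBM (μ : Measure Ω) (F : ℝ → MeasurableSpace Ω) (W : ℝ → Ω → ℝ) : Prop where
  le : ∀ t : ℝ, F t ≤ m
  mono : Monotone F
  adapted : ∀ t : ℝ, 0 ≤ t → MeasurableSpace.comap (W t) inferInstance ≤ F t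
  init : ∀ᵐ ω ∂μ, W 0 ω = 0
  cont : ∀ᵐ ω ∂μ, Continuous fun t => W t ω
  law : ∀ s t : ℝ, 0 ≤ s → s ≤ t →
    μ.map (fun ω => W t ω - W s ω) = gaussianReal 0 ((t - s).toNNReal)
  indep : ∀ s t : ℝ, 0 ≤ s → s ≤ t →
    Indep (MeasurableSpace.comap (fun ω => W t ω - W s ω) inferInstance) (F s) μ

/-- `(B₁, B₂)` is a planar Brownian motion: two independent standard Brownian motions
with respect to the common filtration `F`. -/
def IsPlanarBM (μ : Measure Ω) (F : ℝ → MeasurableSpace Ω) (B₁ B₂ : ℝ → Ω → ℝ) : Prop :=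
  IsBM μ F B₁ ∧ IsBM μ F B₂ ∧
    IndepFun (fun ω => (fun t => B₁ t ω)) (fun ω => (fun t => B₂ t ω)) μ

/-- `L` is the (right) local time at the origin of the process `Y`:
`L t = lim_{ε ↓ 0} (4ε)⁻¹ ∫₀ᵗ 1{|Y(s)| < ε} ds`. -/
def IsLocalTime (μ : Measure Ω) (Y L : ℝ → Ω → ℝ) : Prop :=
  ∀ᵐ ω ∂μ, ∀ t : ℝ, 0 ≤ t →
    Tendsto (fun ε : ℝ =>
        (4 * ε)⁻¹ * ∫ s in (0:ℝ)..t, (if |Y s ω| < ε then (1:ℝ) else 0))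
      (nhdsWithin 0 (Ioi 0)) (nhds (L t ω))

/-- A continuous local martingale with respect to the filtration `F`. -/
def IsContLocMart (μ : Measure Ω) (F : Filtration ℝ m) (M : ℝ → Ω → ℝ) : Prop :=
  (∀ᵐ ω ∂μ, Continuous fun t => M t ω) ∧ StronglyAdapted F M ∧
    ∃ τ : ℕ → Ω → ℝ, (∀ n, IsStoppingTime F (fun ω => (τ n ω : WithTop ℝ))) ∧
      (∀ᵐ ω ∂μ, Tendsto (fun n => τ n ω) atTop atTop) ∧
      ∀ n, Martingale (fun t ω => M (min t (τ n ω)) ω) F μ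

/-- Orthogonality: the cross-variation `⟨M,N⟩` vanishes identically. -/
def Orthogonal (μ : Measure Ω) (M N : ℝ → Ω → ℝ) : Prop :=
  IsQV μ M N fun _ _ => 0

/-- Domination: `⟨M⟩(t) = ∫₀ᵗ q(s) d⟨N⟩(s)` for a progressively measurable
process `q` with values in `[0,c]`. -/
def Dominated (μ : Measure Ω) (F : Filtration ℝ m) (M N : ℝ → Ω → ℝ) (c : ℝ) : Prop :=
  ∃ QM QN q : ℝ → Ω → ℝ, IsQV μ M M QM ∧ IsQV μ N N QN ∧
    ProgMeasurable F q ∧ (∀ t ω, q t ω ∈ Icc (0:ℝ) c) ∧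
    ∀ᵐ ω ∂μ, ∃ ν : Measure ℝ,
      (∀ a b : ℝ, 0 ≤ a → a ≤ b → ν (Ioc a b) = ENNReal.ofReal (QN b ω - QN a ω)) ∧
      ∀ t : ℝ, 0 ≤ t → QM t ω = ∫ s in Ioc (0:ℝ) t, q s ω ∂ν

/-- The law of the two-dimensional process `(X₁, X₂)` on path space. -/
def pathLaw (μ : Measure Ω) (X₁ X₂ : ℝ → Ω → ℝ) : Measure (ℝ → ℝ × ℝ) :=
  μ.map fun ω => (fun t => (X₁ t ω, X₂ t ω))
/-- `(X₁, X₂)` solves the system (1.1)-(1.2) driven by `(B₁, B₂)`. -/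
def Solves11 (μ : Measure Ω) (F : ℝ → MeasurableSpace Ω) (g h ρ σ x₁ x₂ : ℝ)
    (B₁ B₂ X₁ X₂ : ℝ → Ω → ℝ) : Prop :=
  (∀ t : ℝ, 0 ≤ t →
    MeasurableSpace.comap (fun ω => (X₁ t ω, X₂ t ω)) inferInstance ≤ F t) ∧
  (∀ᵐ ω ∂μ, Continuous (fun t => X₁ t ω) ∧ Continuous (fun t => X₂ t ω)) ∧
  ∃ I₁ I₂ : ℝ → Ω → ℝ,
    IsSI μ (fun s ω => if X₁ s ω ≤ X₂ s ω then σ else ρ) B₁ I₁ ∧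
    IsSI μ (fun s ω => if X₁ s ω ≤ X₂ s ω then ρ else σ) B₂ I₂ ∧
    ∀ᵐ ω ∂μ, ∀ t : ℝ, 0 ≤ t →
      X₁ t ω = x₁ + (∫ s in (0:ℝ)..t, (if X₁ s ω ≤ X₂ s ω then g else -h)) + I₁ t ω ∧
      X₂ t ω = x₂ + (∫ s in (0:ℝ)..t, (if X₁ s ω ≤ X₂ s ω then -h else g)) + I₂ t ω

/-- `(X₁, X₂)` solves the system (4.7)-(4.8), driven by the single Brownian motion `W`. -/
def Solves47 (μ : Measure Ω) (F : ℝ → MeasurableSpace Ω) (g h x₁ x₂ : ℝ)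
    (W X₁ X₂ : ℝ → Ω → ℝ) : Prop :=
  (∀ t : ℝ, 0 ≤ t →
    MeasurableSpace.comap (fun ω => (X₁ t ω, X₂ t ω)) inferInstance ≤ F t) ∧
  (∀ᵐ ω ∂μ, Continuous (fun t => X₁ t ω) ∧ Continuous (fun t => X₂ t ω)) ∧
  ∃ I₁ I₂ : ℝ → Ω → ℝ,
    IsSI μ (fun s ω => if X₁ s ω ≤ X₂ s ω then (0:ℝ) else 1) W I₁ ∧
    IsSI μ (fun s ω => if X₁ s ω ≤ X₂ s ω then (-1:ℝ) else 0) W I₂ ∧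
    ∀ᵐ ω ∂μ, ∀ t : ℝ, 0 ≤ t →
      X₁ t ω = x₁ + (∫ s in (0:ℝ)..t, (if X₁ s ω ≤ X₂ s ω then g else -h)) + I₁ t ω ∧
      X₂ t ω = x₂ + (∫ s in (0:ℝ)..t, (if X₁ s ω ≤ X₂ s ω then -h else g)) + I₂ t ω

/-- `(X₁, X₂)` solves the system (4.9)-(4.10), driven by the single Brownian motion `V`. -/
def Solves49 (μ : Measure Ω) (F : ℝ → MeasurableSpace Ω) (g h x₁ x₂ : ℝ)
    (V X₁ X₂ : ℝ → Ω → ℝ) : Prop :=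
  (∀ t : ℝ, 0 ≤ t →
    MeasurableSpace.comap (fun ω => (X₁ t ω, X₂ t ω)) inferInstance ≤ F t) ∧
  (∀ᵐ ω ∂μ, Continuous (fun t => X₁ t ω) ∧ Continuous (fun t => X₂ t ω)) ∧
  ∃ I₁ I₂ : ℝ → Ω → ℝ,
    IsSI μ (fun s ω => if X₁ s ω ≤ X₂ s ω then (0:ℝ) else 1) V I₁ ∧
    IsSI μ (fun s ω => if X₁ s ω ≤ X₂ s ω then (1:ℝ) else 0) V I₂ ∧
    ∀ᵐ ω ∂μ, ∀ t : ℝ, 0 ≤ t →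
      X₁ t ω = x₁ + (∫ s in (0:ℝ)..t, (if X₁ s ω ≤ X₂ s ω then g else -h)) + I₁ t ω ∧
      X₂ t ω = x₂ + (∫ s in (0:ℝ)..t, (if X₁ s ω ≤ X₂ s ω then -h else g)) + I₂ t ω

/-- `(X₁, X₂)` solves the system (2.12)-(2.13), driven by the planar BM `(W₁, W₂)`. -/
def Solves212 (μ : Measure Ω) (F : ℝ → MeasurableSpace Ω) (g h ρ σ x₁ x₂ : ℝ)
    (W₁ W₂ X₁ X₂ : ℝ → Ω → ℝ) : Prop :=
  (∀ t : ℝ, 0 ≤ t →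
    MeasurableSpace.comap (fun ω => (X₁ t ω, X₂ t ω)) inferInstance ≤ F t) ∧
  (∀ᵐ ω ∂μ, Continuous (fun t => X₁ t ω) ∧ Continuous (fun t => X₂ t ω)) ∧
  ∃ I₁ I₂ : ℝ → Ω → ℝ,
    IsSI2 μ (fun s ω => if X₁ s ω ≤ X₂ s ω then 0 else ρ) W₁
            (fun s ω => if X₁ s ω ≤ X₂ s ω then σ else 0) W₂ I₁ ∧
    IsSI2 μ (fun s ω => if X₁ s ω ≤ X₂ s ω then -ρ else 0) W₁
            (fun s ω => if X₁ s ω ≤ X₂ s ω then 0 else -σ) W₂ I₂ ∧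
    ∀ᵐ ω ∂μ, ∀ t : ℝ, 0 ≤ t →
      X₁ t ω = x₁ + (∫ s in (0:ℝ)..t, (if X₁ s ω ≤ X₂ s ω then g else -h)) + I₁ t ω ∧
      X₂ t ω = x₂ + (∫ s in (0:ℝ)..t, (if X₁ s ω ≤ X₂ s ω then -h else g)) + I₂ t ω

/-- `(X₁, X₂)` solves the system (2.14)-(2.15), driven by the planar BM `(V₁, V₂)`. -/
def Solves214 (μ : Measure Ω) (F : ℝ → MeasurableSpace Ω) (g h ρ σ x₁ x₂ : ℝ)
    (V₁ V₂ X₁ X₂ : ℝ → Ω → ℝ) : Prop :=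
  (∀ t : ℝ, 0 ≤ t →
    MeasurableSpace.comap (fun ω => (X₁ t ω, X₂ t ω)) inferInstance ≤ F t) ∧
  (∀ᵐ ω ∂μ, Continuous (fun t => X₁ t ω) ∧ Continuous (fun t => X₂ t ω)) ∧
  ∃ I₁ I₂ : ℝ → Ω → ℝ,
    IsSI2 μ (fun s ω => if X₁ s ω ≤ X₂ s ω then 0 else ρ) V₁
            (fun s ω => if X₁ s ω ≤ X₂ s ω then σ else 0) V₂ I₁ ∧
    IsSI2 μ (fun s ω => if X₁ s ω ≤ X₂ s ω then ρ else 0) V₁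
            (fun s ω => if X₁ s ω ≤ X₂ s ω then 0 else σ) V₂ I₂ ∧
    ∀ᵐ ω ∂μ, ∀ t : ℝ, 0 ≤ t →
      X₁ t ω = x₁ + (∫ s in (0:ℝ)..t, (if X₁ s ω ≤ X₂ s ω then g else -h)) + I₁ t ω ∧
      X₂ t ω = x₂ + (∫ s in (0:ℝ)..t, (if X₁ s ω ≤ X₂ s ω then -h else g)) + I₂ t ω

/-- `(X₁, X₂)` solves the system `dX = Σ(X) dU + G(X) dt` of (eq:xSigma), where
`Σ(x) = Σ₊ 1{x₁ > x₂} + Σ₋ 1{x₁ ≤ x₂}`. -/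
def SolvesGen (μ : Measure Ω) (F : ℝ → MeasurableSpace Ω) (g h : ℝ)
    (Sp Sm : Matrix (Fin 2) (Fin 2) ℝ) (x₁ x₂ : ℝ)
    (U₁ U₂ X₁ X₂ : ℝ → Ω → ℝ) : Prop :=
  (∀ t : ℝ, 0 ≤ t →
    MeasurableSpace.comap (fun ω => (X₁ t ω, X₂ t ω)) inferInstance ≤ F t) ∧
  (∀ᵐ ω ∂μ, Continuous (fun t => X₁ t ω) ∧ Continuous (fun t => X₂ t ω)) ∧
  ∃ I₁ I₂ : ℝ → Ω → ℝ,
    IsSI2 μ (fun s ω => if X₁ s ω ≤ X₂ s ω then Sm 0 0 else Sp 0 0) U₁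
            (fun s ω => if X₁ s ω ≤ X₂ s ω then Sm 0 1 else Sp 0 1) U₂ I₁ ∧
    IsSI2 μ (fun s ω => if X₁ s ω ≤ X₂ s ω then Sm 1 0 else Sp 1 0) U₁
            (fun s ω => if X₁ s ω ≤ X₂ s ω then Sm 1 1 else Sp 1 1) U₂ I₂ ∧
    ∀ᵐ ω ∂μ, ∀ t : ℝ, 0 ≤ t →
      X₁ t ω = x₁ + (∫ s in (0:ℝ)..t, (if X₁ s ω ≤ X₂ s ω then g else -h)) + I₁ t ω ∧
      X₂ t ω = x₂ + (∫ s in (0:ℝ)..t, (if X₁ s ω ≤ X₂ s ω then -h else g)) + I₂ t ω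



/-! ### The mollified absolute value -/

def phiE (e x : ℝ) : ℝ := (|x + e| + |x - e| - 2 * |x|) / e ^ 2

def pE (e x : ℝ) : ℝ := ((x + e) * |x + e| + (x - e) * |x - e| - 2 * (x * |x|)) / (2 * e ^ 2)

def fE (e x : ℝ) : ℝ := (|x + e| ^ 3 + |x - e| ^ 3 - 2 * |x| ^ 3) / (6 * e ^ 2)

lemma continuous_phiE (e : ℝ) : Continuous (phiE e) := by unfold phiE; fun_prop

lemma continuous_pE (e : ℝ) : Continuous (pE e) := by unfold pE; fun_prop

lemma continuous_fE (e : ℝ) : Continuous (fE e) := by unfold fE; fun_prop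

lemma taylor_cube (x d : ℝ) :
    |(|x + d| ^ 3 - |x| ^ 3 - 3 * (x * |x|) * d - 3 * |x| * d ^ 2)| ≤ |d| ^ 3 := by
  have hpos : ∀ x d : ℝ, 0 ≤ x →
      |(|x + d| ^ 3 - |x| ^ 3 - 3 * (x * |x|) * d - 3 * |x| * d ^ 2)| ≤ |d| ^ 3 := by
    intro x d hx
    rw [abs_of_nonneg hx]
    rcases le_or_gt 0 (x + d) with h | h
    · rw [abs_of_nonneg h]
      rw [← abs_pow]
      apply le_of_eq; congr 1; ring
    · rw [abs_of_neg h]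
      have hd : d < 0 := by linarith
      rw [abs_of_neg hd]
      have e1 : (-(x + d)) ^ 3 ≤ (-d) ^ 3 := pow_le_pow_left₀ (by linarith) (by linarith) 3
      have e2 : 0 ≤ (-(x + d)) ^ 3 := pow_nonneg (by linarith) 3
      rw [abs_le]
      constructor <;> nlinarith
  rcases le_total 0 x with h | h
  · exact hpos x d h
  · have := hpos (-x) (-d) (by linarith)
    rw [abs_neg, abs_neg, show -x + -d = -(x + d) by ring, abs_neg] at this
    convert this using 2
    ring

lemma fE_taylor {e : ℝ} (he : 0 < e) (x d : ℝ) :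
    |fE e (x + d) - fE e x - pE e x * d - phiE e x / 2 * d ^ 2| ≤ |d| ^ 3 / e ^ 2 := by
  have h1 := taylor_cube (x + e) d
  have h2 := taylor_cube (x - e) d
  have h3 := taylor_cube x d
  have key : fE e (x + d) - fE e x - pE e x * d - phiE e x / 2 * d ^ 2 =
      ((|x + e + d| ^ 3 - |x + e| ^ 3 - 3 * ((x + e) * |x + e|) * d - 3 * |x + e| * d ^ 2) +
      (|x - e + d| ^ 3 - |x - e| ^ 3 - 3 * ((x - e) * |x - e|) * d - 3 * |x - e| * d ^ 2) -
      2 * (|x + d| ^ 3 - |x| ^ 3 - 3 * (x * |x|) * d - 3 * |x| * d ^ 2)) / (6 * e ^ 2) := by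
    unfold fE pE phiE
    rw [show x + d + e = x + e + d by ring, show x + d - e = x - e + d by ring]
    field_simp
    ring
  rw [key, abs_div, abs_of_pos (by positivity : 0 < 6 * e ^ 2), div_le_div_iff₀ (by positivity)
    (by positivity)]
  have h0 : 0 ≤ |d| ^ 3 := by positivity
  have : |((|x + e + d| ^ 3 - |x + e| ^ 3 - 3 * ((x + e) * |x + e|) * d - 3 * |x + e| * d ^ 2) +
      (|x - e + d| ^ 3 - |x - e| ^ 3 - 3 * ((x - e) * |x - e|) * d - 3 * |x - e| * d ^ 2) -
      2 * (|x + d| ^ 3 - |x| ^ 3 - 3 * (x * |x|) * d - 3 * |x| * d ^ 2))| ≤ 6 * |d| ^ 3 := by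
    rw [abs_le] at h1 h2 h3 ⊢
    constructor <;> linarith
  nlinarith [sq_nonneg e]

lemma phiE_eq {e : ℝ} (he : 0 < e) (x : ℝ) : phiE e x = 2 / e ^ 2 * max (e - |x|) 0 := by
  unfold phiE
  have : |x + e| + |x - e| - 2 * |x| = 2 * max (e - |x|) 0 := by
    rcases abs_cases (x + e) with h1 | h1 <;> rcases abs_cases (x - e) with h2 | h2 <;>
      rcases abs_cases x with h3 | h3 <;> rcases max_cases (e - |x|) 0 with h4 | h4 <;> linarith
  rw [this]; ring

lemma phiE_nonneg {e : ℝ} (he : 0 < e) (x : ℝ) : 0 ≤ phiE e x := by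
  rw [phiE_eq he]; positivity

lemma phiE_le {e : ℝ} (he : 0 < e) (x : ℝ) : phiE e x ≤ 2 / e := by
  rw [phiE_eq he]
  have : max (e - |x|) 0 ≤ e := max_le (by linarith [abs_nonneg x]) he.le
  calc _ ≤ 2 / e ^ 2 * e := by gcongr
    _ = _ := by field_simp

lemma pE_eq_psgn {e : ℝ} (he : 0 < e) {x : ℝ} (hx : e ≤ |x|) : pE e x = psgn x := by
  unfold pE psgn
  have he2 : (2 * e ^ 2) ≠ 0 := by positivity
  rcases abs_cases x with ⟨h, h'⟩ | ⟨h, h'⟩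
  · rw [h] at hx
    rw [if_pos (by linarith), h, abs_of_nonneg (by linarith : 0 ≤ x + e),
      abs_of_nonneg (by linarith : 0 ≤ x - e), div_eq_iff he2]
    ring
  · rw [h] at hx
    rw [if_neg (by linarith), h, abs_of_nonpos (by linarith : x + e ≤ 0),
      abs_of_nonpos (by linarith : x - e ≤ 0), div_eq_iff he2]
    ring

lemma abs_psgn (x : ℝ) : |psgn x| = 1 := by
  unfold psgn; split_ifs <;> simp

lemma measurable_psgn : Measurable psgn := by
  unfold psgn
  exact Measurable.ite measurableSet_Ioi measurable_const measurable_const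

lemma abs_pE_le {e : ℝ} (he : 0 < e) (x : ℝ) : |pE e x| ≤ 1 := by
  rcases le_or_gt e |x| with hx | hx
  · rw [pE_eq_psgn he hx, abs_psgn]
  · have hx' := abs_lt.1 hx
    unfold pE
    rw [abs_div, abs_of_pos (by positivity : 0 < 2 * e ^ 2), div_le_one (by positivity)]
    rw [abs_of_nonneg (by linarith : 0 ≤ x + e), abs_of_nonpos (by linarith : x - e ≤ 0)]
    rcases abs_cases x with ⟨h, h'⟩ | ⟨h, h'⟩ <;> rw [h, abs_le] <;> constructor <;>
      nlinarith [sq_nonneg (x - e), sq_nonneg (x + e)]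

lemma abs_pE_sub_psgn_le {e : ℝ} (he : 0 < e) (x : ℝ) :
    |pE e x - psgn x| ≤ 2 * (if |x| < e then (1 : ℝ) else 0) := by
  split_ifs with h
  · have h1 := abs_pE_le he x
    have h2 := abs_psgn x
    have := abs_sub (pE e x) (psgn x)
    linarith
  · rw [pE_eq_psgn he (not_lt.1 h)]; simp

lemma abs_fE_sub_le {e : ℝ} (he : 0 < e) (x : ℝ) : |(fE e x - |x|)| ≤ e := by
  have key : |((|x + e| ^ 3 + |x - e| ^ 3 - 2 * |x| ^ 3) - 6 * e ^ 2 * |x|)| ≤ 6 * e ^ 2 * e := by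
    have h1 := taylor_cube x e
    have h2 := taylor_cube x (-e)
    rw [abs_neg] at h2
    rw [abs_of_pos he] at h1 h2
    rw [← sub_eq_add_neg] at h2
    rw [abs_le] at *
    have : 0 < e ^ 3 := by positivity
    constructor <;> nlinarith
  have : fE e x - |x| = ((|x + e| ^ 3 + |x - e| ^ 3 - 2 * |x| ^ 3) - 6 * e ^ 2 * |x|) /
      (6 * e ^ 2) := by unfold fE; field_simp
  rw [this, abs_div, abs_of_pos (by positivity : 0 < 6 * e ^ 2), div_le_iff₀ (by positivity)]
  linarith

lemma phiE_layer {e : ℝ} (he : 0 < e) (x : ℝ) :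
    phiE e x = 2 / e ^ 2 * ∫ r in Ioc 0 e, (if |x| < r then (1 : ℝ) else 0) := by
  rw [phiE_eq he]
  congr 1
  have : (fun r : ℝ => if |x| < r then (1 : ℝ) else 0) = (Ioi |x|).indicator 1 := by
    ext r; simp [indicator_apply]
  rw [this, integral_indicator measurableSet_Ioi, Measure.restrict_restrict measurableSet_Ioi]
  simp only [Pi.one_apply, integral_const, smul_eq_mul, mul_one]
  have h2 : Ioi |x| ∩ Ioc 0 e = Ioc |x| e := by
    ext r; simp only [mem_inter_iff, mem_Ioi, mem_Ioc]
    constructor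
    · tauto
    · intro h; exact ⟨h.1, (abs_nonneg x).trans_lt h.1, h.2⟩
  rw [h2, measureReal_restrict_apply_univ, Measure.real, Real.volume_Ioc, ENNReal.toReal_ofReal', max_comm, max_comm]


/-! ### Deterministic limits along a continuous path -/

lemma riemann_tendsto {g k : ℝ → ℝ} (hg : Continuous g) (hk : Measurable k)
    (hk1 : ∀ x, |k x| ≤ 1) {t u : ℝ} (ht : 0 ≤ t) (hu : u ∈ Icc (0 : ℝ) 1) :
    Tendsto (fun n : ℕ => ∑ i ∈ Finset.range ⌊u * (n : ℝ)⌋₊,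
      g (i * (t / n)) * ∫ s in ((i : ℝ) * (t / n))..(((i : ℝ) + 1) * (t / n)), k s)
      atTop (nhds (∫ s in (0 : ℝ)..(t * u), g s * k s)) := by
  have hkint : ∀ a b : ℝ, IntervalIntegrable k volume a b := by
    intro a b
    rw [intervalIntegrable_iff]
    exact Measure.integrableOn_of_bounded (M := 1) (by simp)
      hk.aestronglyMeasurable (Eventually.of_forall hk1)
  have hgk : ∀ a b : ℝ, IntervalIntegrable (fun s => g s * k s) volume a b :=
    fun a b => (hkint a b).continuousOn_mul hg.continuousOn
  have hfl : Tendsto (fun n : ℕ => (⌊u * (n : ℝ)⌋₊ : ℝ) * (t / n)) atTop (nhds (t * u)) := by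
    have h1 := (tendsto_nat_floor_mul_div_atTop hu.1).comp
      (tendsto_natCast_atTop_atTop (R := ℝ))
    have h2 := h1.const_mul t
    refine h2.congr fun n => ?_
    simp only [Function.comp_apply]; ring
  have hprim : Tendsto (fun n : ℕ => ∫ s in (0 : ℝ)..((⌊u * (n : ℝ)⌋₊ : ℝ) * (t / n)), g s * k s)
      atTop (nhds (∫ s in (0 : ℝ)..(t * u), g s * k s)) :=
    ((intervalIntegral.continuous_primitive hgk 0).tendsto _).comp hfl
  have hdiff : Tendsto (fun n : ℕ => (∑ i ∈ Finset.range ⌊u * (n : ℝ)⌋₊,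
      g (i * (t / n)) * ∫ s in ((i : ℝ) * (t / n))..(((i : ℝ) + 1) * (t / n)), k s) -
      ∫ s in (0 : ℝ)..((⌊u * (n : ℝ)⌋₊ : ℝ) * (t / n)), g s * k s) atTop (nhds 0) := by
    rw [Metric.tendsto_atTop]
    intro ε hε
    have huc := (isCompact_Icc (a := (0 : ℝ)) (b := t)).uniformContinuousOn_of_continuous
      hg.continuousOn
    rw [Metric.uniformContinuousOn_iff] at huc
    obtain ⟨δ, hδ, H⟩ := huc (ε / (t + 1)) (by positivity)
    obtain ⟨N, hN⟩ := exists_nat_gt (t / δ)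
    refine ⟨N + 1, fun n hn => ?_⟩
    have hn0 : (0 : ℝ) < n := by
      have : (1 : ℝ) ≤ n := by exact_mod_cast (by omega : 1 ≤ n)
      linarith
    set h : ℝ := t / n with hh
    have hh0 : 0 ≤ h := by positivity
    have hhδ : h < δ := by
      rw [hh, div_lt_iff₀ hn0]
      rw [div_lt_iff₀ hδ] at hN
      have : (N : ℝ) ≤ n := by exact_mod_cast (by omega : N ≤ n)
      nlinarith
    have hnh : (n : ℝ) * h = t := by rw [hh]; field_simp
    set K := ⌊u * (n : ℝ)⌋₊ with hK
    have hKn : (K : ℝ) ≤ n := by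
      calc (K : ℝ) ≤ u * n := Nat.floor_le (by have := hu.1; positivity)
        _ ≤ n := by nlinarith [hu.2]
    have hsum := intervalIntegral.sum_integral_adjacent_intervals (f := fun s => g s * k s)
      (μ := volume) (a := fun i : ℕ => (i : ℝ) * h) (n := K) (fun i _ => hgk _ _)
    simp only [Nat.cast_zero, zero_mul] at hsum
    rw [← hsum, ← Finset.sum_sub_distrib, dist_zero_right]
    have hterm : ∀ i ∈ Finset.range K, ‖g (i * h) * (∫ s in ((i : ℝ) * h)..(((i : ℝ) + 1) * h), k s) -
        ∫ s in ((i : ℝ) * h)..(((i + 1 : ℕ) : ℝ) * h), g s * k s‖ ≤ ε / (t + 1) * h := by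
      intro i hi
      have hiK : (i : ℝ) + 1 ≤ K := by exact_mod_cast Finset.mem_range.1 hi
      push_cast
      rw [← intervalIntegral.integral_const_mul, ← intervalIntegral.integral_sub
        ((hkint _ _).const_mul _) (hgk _ _)]
      have hle : (i : ℝ) * h ≤ (i + 1) * h := by nlinarith
      have hb : ((i : ℝ) + 1) * h ≤ t := by
        rw [← hnh]; nlinarith
      have h0i : 0 ≤ (i : ℝ) * h := by positivity
      have := intervalIntegral.norm_integral_le_of_norm_le_const (a := (i : ℝ) * h)
        (b := (i + 1) * h) (C := ε / (t + 1)) (f := fun s => g (i * h) * k s - g s * k s) ?_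
      · refine this.trans (le_of_eq ?_)
        rw [abs_of_nonneg (by linarith)]; ring
      · intro s hs
        rw [uIoc_of_le hle] at hs
        rw [← sub_mul, norm_mul]
        have h1 : ‖g (i * h) - g s‖ ≤ ε / (t + 1) := by
          rw [← dist_eq_norm]
          refine (H _ ⟨h0i, by linarith⟩ _ ⟨by linarith [hs.1], by linarith [hs.2]⟩ ?_).le
          rw [Real.dist_eq, abs_of_nonpos (by linarith [hs.1])]
          have := hs.2
          linarith
        calc _ ≤ ε / (t + 1) * 1 := mul_le_mul h1 (hk1 s) (abs_nonneg _) (by positivity)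
          _ = _ := mul_one _
    calc _ ≤ ∑ i ∈ Finset.range K, ε / (t + 1) * h := norm_sum_le_of_le _ hterm
      _ = (K : ℝ) * h * (ε / (t + 1)) := by simp; ring
      _ ≤ t * (ε / (t + 1)) := by
        gcongr; rw [← hnh]; gcongr
      _ < ε := by
        rw [mul_div_assoc', div_lt_iff₀ (by linarith)]; nlinarith
  have := hdiff.add hprim
  simpa using this

lemma riemann_tendsto_one {g : ℝ → ℝ} (hg : Continuous g)
    {t u : ℝ} (ht : 0 ≤ t) (hu : u ∈ Icc (0 : ℝ) 1) :
    Tendsto (fun n : ℕ => ∑ i ∈ Finset.range ⌊u * (n : ℝ)⌋₊, g (i * (t / n)) * (t / n))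
      atTop (nhds (∫ s in (0 : ℝ)..(t * u), g s)) := by
  have := riemann_tendsto hg (k := fun _ => 1) measurable_const (by simp) ht hu
  simp only [mul_one] at this
  refine this.congr fun n => Finset.sum_congr rfl fun i _ => ?_
  rw [intervalIntegral.integral_const]
  simp; ring_nf; simp

lemma occ_intervalIntegrable {Y : ℝ → ℝ} (hY : Continuous Y) (e a b : ℝ) :
    IntervalIntegrable (fun s => if |Y s| < e then (1 : ℝ) else 0) volume a b := by
  rw [intervalIntegrable_iff]
  refine Measure.integrableOn_of_bounded (M := 1) (by simp) ?_
    (Eventually.of_forall fun x => by split_ifs <;> simp)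
  exact (Measurable.ite (measurableSet_lt (by fun_prop) measurable_const) measurable_const
    measurable_const).aestronglyMeasurable

lemma occ_tendsto_zero {Y : ℝ → ℝ} {t L : ℝ}
    (hL : Tendsto (fun ε : ℝ =>
        (4 * ε)⁻¹ * ∫ s in (0:ℝ)..t, (if |Y s| < ε then (1:ℝ) else 0))
      (nhdsWithin 0 (Ioi 0)) (nhds L)) :
    Tendsto (fun ε : ℝ => ∫ s in (0:ℝ)..t, (if |Y s| < ε then (1:ℝ) else 0))
      (nhdsWithin 0 (Ioi 0)) (nhds 0) := by
  have h1 : Tendsto (fun ε : ℝ => 4 * ε) (nhdsWithin 0 (Ioi 0)) (nhds 0) := by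
    have : Tendsto (fun ε : ℝ => 4 * ε) (nhds 0) (nhds (4 * 0)) :=
      (continuous_const.mul continuous_id).tendsto 0
    rw [mul_zero] at this
    exact this.mono_left nhdsWithin_le_nhds
  have h2 := h1.mul hL
  rw [zero_mul] at h2
  refine h2.congr' ?_
  filter_upwards [self_mem_nhdsWithin] with ε hε
  have : (4 * ε) ≠ 0 := by have : 0 < ε := hε; positivity
  rw [mul_inv_cancel_left₀ this]

lemma approx_tendsto {Y : ℝ → ℝ} (hY : Continuous Y) {t L : ℝ}
    (hL : Tendsto (fun ε : ℝ =>
        (4 * ε)⁻¹ * ∫ s in (0:ℝ)..t, (if |Y s| < ε then (1:ℝ) else 0))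
      (nhdsWithin 0 (Ioi 0)) (nhds L))
    {G : ℝ → ℝ → ℝ} {G0 : ℝ → ℝ} (hG : ∀ e, Measurable (G e)) (hG0 : Measurable G0)
    (hG0b : ∀ x, |G0 x| ≤ 1)
    (hd : ∀ e, 0 < e → ∀ x, |G e x - G0 x| ≤ 2 * (if |x| < e then (1 : ℝ) else 0))
    {s : ℝ} (hs : s ∈ Icc 0 t) :
    Tendsto (fun ε : ℝ => ∫ r in (0:ℝ)..s, G ε (Y r)) (nhdsWithin 0 (Ioi 0))
      (nhds (∫ r in (0:ℝ)..s, G0 (Y r))) := by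
  have h0 := (occ_tendsto_zero hL).const_mul 2
  rw [mul_zero] at h0
  rw [tendsto_iff_norm_sub_tendsto_zero]
  refine squeeze_zero' (Eventually.of_forall fun _ => norm_nonneg _) ?_ h0
  filter_upwards [self_mem_nhdsWithin] with ε hε
  have hi1 : ∀ a b, IntervalIntegrable (fun r => G ε (Y r)) volume a b := by
    intro a b
    rw [intervalIntegrable_iff]
    refine Measure.integrableOn_of_bounded (M := 3) (by simp)
      ((hG ε).comp hY.measurable).aestronglyMeasurable (Eventually.of_forall fun x => ?_)
    have h1 := hd ε hε (Y x)
    have h2 := hG0b (Y x)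
    have h3 : 2 * (if |Y x| < ε then (1 : ℝ) else 0) ≤ 2 := by split_ifs <;> norm_num
    rw [Real.norm_eq_abs]
    have h4 := abs_add_le (G ε (Y x) - G0 (Y x)) (G0 (Y x))
    rw [sub_add_cancel] at h4
    linarith
  have hi0 : ∀ a b, IntervalIntegrable (fun r => G0 (Y r)) volume a b := by
    intro a b
    rw [intervalIntegrable_iff]
    exact Measure.integrableOn_of_bounded (M := 1) (by simp)
      (hG0.comp hY.measurable).aestronglyMeasurable (Eventually.of_forall fun x => hG0b _)
  rw [← intervalIntegral.integral_sub (hi1 _ _) (hi0 _ _)]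
  have hio := fun a b => (occ_intervalIntegrable hY ε a b).const_mul 2
  calc _ ≤ ∫ r in (0:ℝ)..s, 2 * (if |Y r| < ε then (1:ℝ) else 0) := by
        refine intervalIntegral.norm_integral_le_of_norm_le hs.1
          (Eventually.of_forall fun r _ => hd ε hε (Y r)) (hio _ _)
    _ ≤ ∫ r in (0:ℝ)..t, 2 * (if |Y r| < ε then (1:ℝ) else 0) := by
        refine intervalIntegral.integral_mono_interval le_rfl hs.1 hs.2
          (Eventually.of_forall fun r => ?_) (hio _ _)
        simp only [Pi.zero_apply]; split_ifs <;> simp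
    _ = _ := by rw [intervalIntegral.integral_const_mul]

lemma phi_tendsto {Y : ℝ → ℝ} (hY : Continuous Y) {t L : ℝ} (ht : 0 ≤ t)
    (hL : Tendsto (fun ε : ℝ =>
        (4 * ε)⁻¹ * ∫ s in (0:ℝ)..t, (if |Y s| < ε then (1:ℝ) else 0))
      (nhdsWithin 0 (Ioi 0)) (nhds L)) :
    Tendsto (fun ε : ℝ => (∫ r in (0:ℝ)..t, phiE ε (Y r)) / 2) (nhdsWithin 0 (Ioi 0))
      (nhds (2 * L)) := by
  rw [Metric.tendsto_nhdsWithin_nhds] at hL ⊢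
  intro η hη
  obtain ⟨δ, hδ, H⟩ := hL (η / 4) (by positivity)
  refine ⟨δ, hδ, fun {e} he hed => ?_⟩
  have he : 0 < e := he
  rw [dist_zero_right, Real.norm_eq_abs, abs_of_pos he] at hed
  set O : ℝ → ℝ := fun r => ∫ s in (0:ℝ)..t, (if |Y s| < r then (1:ℝ) else 0) with hO
  have hIntg : Integrable (fun z : ℝ × ℝ => if |Y z.1| < z.2 then (1 : ℝ) else 0)
      ((volume.restrict (Ioc 0 t)).prod (volume.restrict (Ioc 0 e))) := by
    refine Integrable.of_bound (C := 1) ?_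
      (Eventually.of_forall fun x => by split_ifs <;> simp)
    refine (Measurable.ite (measurableSet_lt ?_ ?_) measurable_const
      measurable_const).aestronglyMeasurable
    · have := hY.measurable; fun_prop
    · fun_prop
  have hswap : ∫ r in (0:ℝ)..t, phiE e (Y r) = 2 / e ^ 2 * ∫ r in Ioc 0 e, O r := by
    rw [intervalIntegral.integral_of_le ht]
    simp_rw [phiE_layer he]
    rw [integral_const_mul, integral_integral_swap hIntg]
    simp only [hO, intervalIntegral.integral_of_le ht]
  have hOint : IntegrableOn O (Ioc 0 e) := by
    have := hIntg.integral_prod_right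
    simp only [hO, intervalIntegral.integral_of_le ht]
    exact this
  have hlin : ∫ r in Ioc 0 e, 4 * r * L = 2 * L * e ^ 2 := by
    rw [← intervalIntegral.integral_of_le he.le]
    rw [intervalIntegral.integral_mul_const, intervalIntegral.integral_const_mul, integral_id]
    ring
  have hlini : IntegrableOn (fun r : ℝ => 4 * r * L) (Ioc 0 e) :=
    (by fun_prop : Continuous fun r : ℝ => 4 * r * L).integrableOn_Ioc
  have hbd : ‖∫ r in Ioc 0 e, (O r - 4 * r * L)‖ ≤ ∫ r in Ioc 0 e, 4 * r * (η / 4) := by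
    refine norm_integral_le_of_norm_le
      (by fun_prop : Continuous fun r : ℝ => 4 * r * (η / 4)).integrableOn_Ioc ?_
    filter_upwards [ae_restrict_mem measurableSet_Ioc] with r hr
    have h1 := H (x := r) hr.1 (by
      rw [dist_zero_right, Real.norm_eq_abs, abs_of_pos hr.1]; linarith [hr.2])
    rw [Real.dist_eq] at h1
    have hr4 : 0 < 4 * r := by linarith [hr.1]
    have : O r - 4 * r * L = 4 * r * ((4 * r)⁻¹ * O r - L) := by
      rw [mul_sub, mul_inv_cancel_left₀ hr4.ne']
    rw [this, norm_mul, Real.norm_eq_abs, abs_of_pos hr4]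
    gcongr
    exact h1.le
  have h2 : ∫ r in Ioc 0 e, 4 * r * (η / 4) = η / 2 * e ^ 2 := by
    rw [← intervalIntegral.integral_of_le he.le]
    rw [intervalIntegral.integral_mul_const, intervalIntegral.integral_const_mul, integral_id]
    ring
  rw [integral_sub hOint hlini, hlin, h2, Real.norm_eq_abs] at hbd
  rw [Real.dist_eq, hswap]
  have : 2 / e ^ 2 * (∫ r in Ioc 0 e, O r) / 2 - 2 * L =
      (1 / e ^ 2) * ((∫ r in Ioc 0 e, O r) - 2 * L * e ^ 2) := by field_simp
  rw [this, abs_mul, abs_of_pos (by positivity)]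
  calc _ ≤ 1 / e ^ 2 * (η / 2 * e ^ 2) := by gcongr
    _ = η / 2 := by field_simp
    _ < η := by linarith


/-! ### Brownian increments -/

section BM

variable {Ω' : Type*} {mΩ' : MeasurableSpace Ω'} {μ : Measure Ω'} {F : ℝ → MeasurableSpace Ω'}
  {W : ℝ → Ω' → ℝ}

lemma IsBM.measF (hW : IsBM μ F W) {t : ℝ} (ht : 0 ≤ t) : Measurable[F t] (W t) :=
  measurable_iff_comap_le.2 (hW.adapted t ht)

lemma IsBM.measF_le (hW : IsBM μ F W) {s t : ℝ} (hs : 0 ≤ s) (hst : s ≤ t) :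
    Measurable[F t] (W s) :=
  (hW.measF hs).mono (hW.mono hst) le_rfl

lemma IsBM.meas (hW : IsBM μ F W) {t : ℝ} (ht : 0 ≤ t) : Measurable (W t) :=
  (hW.measF ht).mono (hW.le t) le_rfl

lemma IsBM.meas_inc (hW : IsBM μ F W) {s t : ℝ} (hs : 0 ≤ s) (ht : 0 ≤ t) :
    Measurable (fun ω => W t ω - W s ω) := (hW.meas ht).sub (hW.meas hs)

lemma IsBM.indepFun (hW : IsBM μ F W) {s t : ℝ} (hs : 0 ≤ s) (hst : s ≤ t)
    {β : Type*} [MeasurableSpace β] {G : Ω' → β} (hG : Measurable[F s] G) :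
    IndepFun G (fun ω => W t ω - W s ω) μ := by
  rw [IndepFun_iff_Indep]
  exact (indep_of_indep_of_le_right (hW.indep s t hs hst) (measurable_iff_comap_le.1 hG)).symm

lemma exp_step [IsProbabilityMeasure μ] (hW : IsBM μ F W) {s t : ℝ} (hs : 0 ≤ s) (hst : s ≤ t)
    {G z : Ω' → ℂ} (hG : Measurable[F s] G) (hz : Measurable[F s] z) (hGi : Integrable G μ)
    {K : ℝ} (hK : ∀ ω, ‖z ω‖ ≤ K) :
    Integrable (fun ω => G ω * Complex.exp (z ω * ((W t ω - W s ω : ℝ) : ℂ) -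
      z ω ^ 2 * ((t - s : ℝ) : ℂ) / 2)) μ ∧
    ∫ ω, G ω * Complex.exp (z ω * ((W t ω - W s ω : ℝ) : ℂ) -
      z ω ^ 2 * ((t - s : ℝ) : ℂ) / 2) ∂μ = ∫ ω, G ω ∂μ := by
  have hGm : Measurable G := hG.mono (hW.le s) le_rfl
  have hzm : Measurable z := hz.mono (hW.le s) le_rfl
  have hInc := hW.meas_inc hs (hs.trans hst)
  set D : Ω' → ℝ := fun ω => W t ω - W s ω with hD
  have hU : Measurable[F s] (fun ω => (G ω, z ω)) := Measurable.prodMk hG hz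
  have hUm : Measurable (fun ω => (G ω, z ω)) := hU.mono (hW.le s) le_rfl
  have hind := hW.indepFun hs hst hU
  rw [indepFun_iff_map_prod_eq_prod_map_map hUm.aemeasurable hInc.aemeasurable,
    hW.law s t hs hst] at hind
  set v := (t - s).toNNReal with hv
  have hvv : (v : ℝ) = t - s := Real.coe_toNNReal _ (by linarith)
  let Φ : (ℂ × ℂ) × ℝ → ℂ := fun p => p.1.1 * Complex.exp (p.1.2 * ((p.2 : ℝ) : ℂ) -
      p.1.2 ^ 2 * ((t - s : ℝ) : ℂ) / 2)
  have hΦ : Measurable Φ := by fun_prop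
  have hK0 : 0 ≤ K := by
    have : (univ : Set Ω').Nonempty := by
      rw [nonempty_iff_ne_empty]; intro h
      have := measure_univ (μ := μ); rw [h] at this; simp at this
    obtain ⟨ω, _⟩ := this
    exact (norm_nonneg _).trans (hK ω)
  have hgi : Integrable (fun x : ℝ => (Real.exp (K * x) + Real.exp (-K * x)) *
      Real.exp (K ^ 2 * (t - s) / 2)) (gaussianReal 0 v) :=
    ((integrable_exp_mul_gaussianReal K).add (integrable_exp_mul_gaussianReal (-K))).mul_const _
  have hUi : Integrable (fun p : ℂ × ℂ => ‖p.1‖) (μ.map (fun ω => (G ω, z ω))) := by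
    rw [integrable_map_measure (by fun_prop) hUm.aemeasurable]
    exact hGi.norm
  have hprodi := hUi.mul_prod hgi
  have hae : ∀ᵐ p ∂((μ.map (fun ω => (G ω, z ω))).prod (gaussianReal 0 v)), ‖p.1.2‖ ≤ K := by
    have hms : MeasurableSet {p : (ℂ × ℂ) × ℝ | ‖p.1.2‖ ≤ K} :=
      measurableSet_le (by fun_prop) measurable_const
    rw [← hind, ae_map_iff (hUm.prodMk hInc).aemeasurable hms]
    exact Eventually.of_forall hK
  have hΦi : Integrable Φ ((μ.map (fun ω => (G ω, z ω))).prod (gaussianReal 0 v)) := by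
    refine hprodi.mono' hΦ.aestronglyMeasurable ?_
    filter_upwards [hae] with p hp
    simp only [Φ, norm_mul]
    gcongr
    rw [Complex.norm_exp]
    have hre : |p.1.2.re| ≤ K := (Complex.abs_re_le_norm _).trans hp
    have him : |p.1.2.im| ≤ K := (Complex.abs_im_le_norm _).trans hp
    have e1 : (p.1.2 * ((p.2 : ℝ) : ℂ) - p.1.2 ^ 2 * ((t - s : ℝ) : ℂ) / 2).re =
        p.1.2.re * p.2 + (p.1.2.im ^ 2 - p.1.2.re ^ 2) * (t - s) / 2 := by
      have : ((t - s : ℝ) : ℂ) / 2 = (((t - s) / 2 : ℝ) : ℂ) := by push_cast; ring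
      rw [mul_div_assoc, this]
      simp only [Complex.sub_re, pow_two, Complex.mul_re, Complex.ofReal_re, Complex.ofReal_im]
      ring
    rw [e1, Real.exp_add]
    have h3 : Real.exp (p.1.2.re * p.2) ≤ Real.exp (K * p.2) + Real.exp (-K * p.2) := by
      have : p.1.2.re * p.2 ≤ K * |p.2| := by
        calc _ ≤ |p.1.2.re * p.2| := le_abs_self _
          _ = |p.1.2.re| * |p.2| := abs_mul _ _
          _ ≤ _ := by gcongr
      refine (Real.exp_le_exp.2 this).trans ?_
      rcases abs_cases p.2 with ⟨h, _⟩ | ⟨h, _⟩ <;> rw [h]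
      · linarith [Real.exp_pos (-K * p.2)]
      · rw [show K * -p.2 = -K * p.2 by ring]; linarith [Real.exp_pos (K * p.2)]
    have h4 : (p.1.2.im ^ 2 - p.1.2.re ^ 2) * (t - s) / 2 ≤ K ^ 2 * (t - s) / 2 := by
      have : p.1.2.im ^ 2 ≤ K ^ 2 := sq_le_sq' (by linarith [(abs_le.1 him).1]) (abs_le.1 him).2
      have : 0 ≤ t - s := by linarith
      have : p.1.2.im ^ 2 - p.1.2.re ^ 2 ≤ K ^ 2 := by nlinarith [sq_nonneg p.1.2.re]
      gcongr
    gcongr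
  constructor
  · have := hΦi
    rw [← hind, integrable_map_measure hΦ.aestronglyMeasurable
      (hUm.prodMk hInc).aemeasurable] at this
    exact this
  · have h1 : ∫ ω, Φ ((G ω, z ω), D ω) ∂μ = ∫ p, Φ p ∂((μ.map (fun ω => (G ω, z ω))).prod
        (gaussianReal 0 v)) := by
      rw [← hind, integral_map (hUm.prodMk hInc).aemeasurable hΦ.aestronglyMeasurable]
    have h2 : ∫ p, Φ p ∂((μ.map (fun ω => (G ω, z ω))).prod (gaussianReal 0 v)) =
        ∫ p : ℂ × ℂ, p.1 ∂(μ.map (fun ω => (G ω, z ω))) := by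
      rw [integral_prod _ hΦi]
      refine integral_congr_ae (Eventually.of_forall fun p => ?_)
      simp only [Φ]
      rw [integral_const_mul]
      have : ∀ x : ℝ, Complex.exp (p.2 * (x : ℂ) - p.2 ^ 2 * ((t - s : ℝ) : ℂ) / 2) =
          Complex.exp (p.2 * (x : ℂ)) * Complex.exp (- (p.2 ^ 2 * ((t - s : ℝ) : ℂ) / 2)) := by
        intro x; rw [← Complex.exp_add, sub_eq_add_neg]
      simp_rw [this]
      rw [integral_mul_const]
      have hm := complexMGF_id_gaussianReal (μ := 0) (v := v) p.2
      simp only [complexMGF, id] at hm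
      rw [hm, ← Complex.exp_add]
      have : p.2 * ((0 : ℝ) : ℂ) + ((v : ℝ) : ℂ) * p.2 ^ 2 / 2 +
          -(p.2 ^ 2 * ((t - s : ℝ) : ℂ) / 2) = 0 := by
        rw [hvv]; push_cast; ring
      rw [this, Complex.exp_zero, mul_one]
    rw [integral_map hUm.aemeasurable (by fun_prop)] at h2
    exact h1.trans h2

lemma expmart [IsProbabilityMeasure μ] (hW : IsBM μ F W) {h : ℝ} (hh : 0 ≤ h)
    {z : ℕ → Ω' → ℂ} (hz : ∀ i : ℕ, Measurable[F (i * h)] (z i))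
    {K : ℝ} (hK : ∀ i ω, ‖z i ω‖ ≤ K) (k : ℕ) :
    Measurable[F (k * h)] (fun ω => ∏ i ∈ Finset.range k,
      Complex.exp (z i ω * ((W (((i : ℝ) + 1) * h) ω - W (i * h) ω : ℝ) : ℂ) -
        z i ω ^ 2 * (h : ℂ) / 2)) ∧
    Integrable (fun ω => ∏ i ∈ Finset.range k,
      Complex.exp (z i ω * ((W (((i : ℝ) + 1) * h) ω - W (i * h) ω : ℝ) : ℂ) -
        z i ω ^ 2 * (h : ℂ) / 2)) μ ∧
    ∫ ω, ∏ i ∈ Finset.range k,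
      Complex.exp (z i ω * ((W (((i : ℝ) + 1) * h) ω - W (i * h) ω : ℝ) : ℂ) -
        z i ω ^ 2 * (h : ℂ) / 2) ∂μ = 1 := by
  induction k with
  | zero => simp
  | succ k ih =>
    obtain ⟨ih1, ih2, ih3⟩ := ih
    simp_rw [Finset.prod_range_succ]
    have hk0 : 0 ≤ (k : ℝ) * h := by positivity
    have hle : (k : ℝ) * h ≤ ((k : ℝ) + 1) * h := by nlinarith
    have hstep := exp_step hW hk0 hle ih1 (hz k) ih2 (hK k)
    rw [show ((k : ℝ) + 1) * h - k * h = h by ring] at hstep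
    refine ⟨?_, hstep.1, hstep.2.trans ih3⟩
    rw [show (((k + 1 : ℕ) : ℝ)) = (k : ℝ) + 1 by push_cast; ring]
    have m1 := ih1.mono (hW.mono hle) le_rfl
    have m2 := (hz k).mono (hW.mono hle) le_rfl
    have m3 := hW.measF (hk0.trans hle)
    have m4 := hW.measF_le hk0 hle
    have m5 : Measurable[F (((k : ℝ) + 1) * h)]
        (fun ω => W (((k : ℝ) + 1) * h) ω - W (k * h) ω) := Measurable.sub m3 m4
    have m6 := (Complex.measurable_ofReal.comp m5)
    refine Measurable.mul m1 (Complex.measurable_exp.comp ?_)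
    refine Measurable.sub (Measurable.mul m2 ?_) ?_
    · exact m6
    · exact Measurable.div_const (Measurable.mul_const (Measurable.pow_const m2 2) _) _

/-- Absolute moments of the standard Gaussian. -/
def cp (p : ℕ) : ℝ := ∫ x, |x| ^ p ∂(gaussianReal 0 1)

lemma cp_nonneg (p : ℕ) : 0 ≤ cp p := integral_nonneg fun _ => by positivity

lemma moment_int (p : ℕ) (hp : p ≠ 0) (v : NNReal) :
    Integrable (fun x => |x| ^ p) (gaussianReal 0 v) := by
  have := (memLp_id_gaussianReal (μ := 0) (v := v) (p : NNReal)).integrable_norm_pow (p := p) hp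
  simpa using this

lemma IsBM.moment (hW : IsBM μ F W) {s t : ℝ} (hs : 0 ≤ s) (hst : s ≤ t) (p : ℕ) (hp : p ≠ 0) :
    Integrable (fun ω => |W t ω - W s ω| ^ p) μ ∧
    ∫ ω, |W t ω - W s ω| ^ p ∂μ = Real.sqrt (t - s) ^ p * cp p := by
  have hInc := hW.meas_inc hs (hs.trans hst)
  have hlaw := hW.law s t hs hst
  have hm : Measurable (fun x : ℝ => |x| ^ p) := by fun_prop
  constructor
  · have := moment_int p hp (t - s).toNNReal
    rw [← hlaw, integrable_map_measure hm.aestronglyMeasurable hInc.aemeasurable] at this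
    exact this
  · rw [← integral_map (φ := fun ω => W t ω - W s ω) (f := fun x => |x| ^ p) hInc.aemeasurable
      hm.aestronglyMeasurable, hlaw]
    have hsc := gaussianReal_map_const_mul (μ := 0) (v := 1) (Real.sqrt (t - s))
    rw [mul_zero, mul_one] at hsc
    have hv : (NNReal.mk (Real.sqrt (t - s) ^ 2) (sq_nonneg _)) = (t - s).toNNReal := by
      ext
      rw [Real.coe_toNNReal _ (by linarith)]
      simp only [NNReal.coe_mk]
      exact Real.sq_sqrt (by linarith)
    rw [hv] at hsc
    rw [← hsc, integral_map (by fun_prop) hm.aestronglyMeasurable]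
    simp_rw [abs_mul, mul_pow]
    rw [integral_const_mul, abs_of_nonneg (Real.sqrt_nonneg _), cp]

lemma cp_two : cp 2 = 1 := by
  have := variance_id_gaussianReal (μ := 0) (v := 1)
  rw [variance_eq_integral (by fun_prop)] at this
  simp only [id, integral_id_gaussianReal, sub_zero] at this
  simp only [cp, sq_abs, this, NNReal.coe_one]

lemma quad_L2 [IsProbabilityMeasure μ] (hW : IsBM μ F W) {h : ℝ} (hh : 0 ≤ h)
    {a : ℕ → Ω' → ℝ} (ha : ∀ i : ℕ, Measurable[F (i * h)] (a i))
    {C : ℝ} (hC : ∀ i ω, |a i ω| ≤ C) (k : ℕ) :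
    Measurable[F (k * h)] (fun ω => ∑ i ∈ Finset.range k,
      a i ω * ((W (((i : ℝ) + 1) * h) ω - W (i * h) ω) ^ 2 - h)) ∧
    Integrable (fun ω => (∑ i ∈ Finset.range k,
      a i ω * ((W (((i : ℝ) + 1) * h) ω - W (i * h) ω) ^ 2 - h)) ^ 2) μ ∧
    ∫ ω, (∑ i ∈ Finset.range k,
      a i ω * ((W (((i : ℝ) + 1) * h) ω - W (i * h) ω) ^ 2 - h)) ^ 2 ∂μ ≤
        k * (C ^ 2 * ((2 * cp 4 + 2) * h ^ 2)) := by
  induction k with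
  | zero => simp
  | succ k ih =>
    obtain ⟨ih1, ih2, ih3⟩ := ih
    simp_rw [Finset.sum_range_succ]
    have hk0 : 0 ≤ (k : ℝ) * h := by positivity
    have hle : (k : ℝ) * h ≤ ((k : ℝ) + 1) * h := by nlinarith
    set S : Ω' → ℝ := fun ω => ∑ i ∈ Finset.range k,
      a i ω * ((W (((i : ℝ) + 1) * h) ω - W (i * h) ω) ^ 2 - h) with hS
    set D : Ω' → ℝ := fun ω => W (((k : ℝ) + 1) * h) ω - W (k * h) ω with hD
    have hDm : Measurable D := hW.meas_inc hk0 (hk0.trans hle)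
    have hdiff : ((k : ℝ) + 1) * h - k * h = h := by ring
    have hSm : Measurable S := ih1.mono (hW.le _) le_rfl
    have ham : Measurable (a k) := (ha k).mono (hW.le _) le_rfl
    obtain ⟨i2, e2⟩ := hW.moment hk0 hle 2 (by norm_num)
    obtain ⟨i4, e4⟩ := hW.moment hk0 hle 4 (by norm_num)
    have sqh : Real.sqrt h ^ 2 = h := Real.sq_sqrt hh
    rw [hdiff, cp_two, mul_one, sqh] at e2
    rw [hdiff, show Real.sqrt h ^ 4 = (Real.sqrt h ^ 2) ^ 2 by ring, sqh] at e4
    have i2' : Integrable (fun ω => D ω ^ 2) μ := by simpa [hD, sq_abs] using i2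
    have e2' : ∫ ω, D ω ^ 2 ∂μ = h := by simpa [hD, sq_abs] using e2
    have iξ : Integrable (fun ω => D ω ^ 2 - h) μ := i2'.sub (integrable_const _)
    have eξ : ∫ ω, (D ω ^ 2 - h) ∂μ = 0 := by
      rw [integral_sub i2' (integrable_const _), e2']; simp
    have dom : ∀ ω, (a k ω * (D ω ^ 2 - h)) ^ 2 ≤ C ^ 2 * (2 * |D ω| ^ 4 + 2 * h ^ 2) := by
      intro ω
      rw [mul_pow]
      have h1 : a k ω ^ 2 ≤ C ^ 2 := by
        rw [← sq_abs]; exact pow_le_pow_left₀ (abs_nonneg _) (hC k ω) 2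
      have h2 : (D ω ^ 2 - h) ^ 2 ≤ 2 * |D ω| ^ 4 + 2 * h ^ 2 := by
        rw [show |D ω| ^ 4 = (|D ω| ^ 2) ^ 2 by ring, sq_abs]
        nlinarith [sq_nonneg (D ω ^ 2 + h)]
      exact mul_le_mul h1 h2 (sq_nonneg _) (sq_nonneg _)
    have domi : Integrable (fun ω => C ^ 2 * (2 * |D ω| ^ 4 + 2 * h ^ 2)) μ :=
      ((i4.const_mul 2).add (integrable_const _)).const_mul _
    have i3 : Integrable (fun ω => (a k ω * (D ω ^ 2 - h)) ^ 2) μ := by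
      refine domi.mono' (by fun_prop) (Eventually.of_forall fun ω => ?_)
      rw [Real.norm_eq_abs, abs_of_nonneg (sq_nonneg _)]
      exact dom ω
    have b3 : ∫ ω, (a k ω * (D ω ^ 2 - h)) ^ 2 ∂μ ≤ C ^ 2 * ((2 * cp 4 + 2) * h ^ 2) := by
      refine (integral_mono i3 domi dom).trans (le_of_eq ?_)
      rw [integral_const_mul, integral_add (i4.const_mul 2) (integrable_const _),
        integral_const_mul, e4]
      simp only [integral_const, probReal_univ, smul_eq_mul, one_mul]
      ring
    have hSa : Measurable[F (k * h)] (fun ω => S ω * a k ω) := Measurable.mul ih1 (ha k)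
    have hSai : Integrable (fun ω => S ω * a k ω) μ := by
      have : Integrable (fun ω => (S ω ^ 2 + 1) * C) μ :=
        (ih2.add (integrable_const _)).mul_const _
      refine this.mono' (by fun_prop) (Eventually.of_forall fun ω => ?_)
      rw [Real.norm_eq_abs, abs_mul]
      refine mul_le_mul ?_ (hC k ω) (abs_nonneg _) (by positivity)
      rw [← sq_abs]; nlinarith [sq_nonneg (|S ω| - 1)]
    have hind : IndepFun (fun ω => S ω * a k ω) (fun ω => D ω ^ 2 - h) μ :=
      (hW.indepFun hk0 hle hSa).comp measurable_id
        (by fun_prop : Measurable fun x : ℝ => x ^ 2 - h)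
    have icross := hind.integrable_mul hSai iξ
    have ecross := hind.integral_mul_eq_mul_integral (by fun_prop) (by fun_prop)
    rw [eξ, mul_zero] at ecross
    have icross' : Integrable (fun ω => 2 * (S ω * a k ω * (D ω ^ 2 - h))) μ := icross.const_mul 2
    have ecross' : ∫ ω, 2 * (S ω * a k ω * (D ω ^ 2 - h)) ∂μ = 0 := by
      rw [integral_const_mul]
      simp only [Pi.mul_apply] at ecross
      rw [ecross, mul_zero]
    have expand : ∀ ω, (S ω + a k ω * (D ω ^ 2 - h)) ^ 2 =
        (S ω ^ 2 + 2 * (S ω * a k ω * (D ω ^ 2 - h))) + (a k ω * (D ω ^ 2 - h)) ^ 2 := by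
      intro ω; ring
    refine ⟨?_, ?_, ?_⟩
    · rw [show (((k + 1 : ℕ) : ℝ)) = (k : ℝ) + 1 by push_cast; ring]
      have m1 := ih1.mono (hW.mono hle) le_rfl
      have m2 := (ha k).mono (hW.mono hle) le_rfl
      have m3 := hW.measF (hk0.trans hle)
      have m4 := hW.measF_le hk0 hle
      exact Measurable.add m1 (Measurable.mul m2
        (Measurable.sub_const (Measurable.pow_const (Measurable.sub m3 m4) 2) _))
    · change Integrable (fun ω => (S ω + a k ω * (D ω ^ 2 - h)) ^ 2) μ
      simp_rw [expand]
      exact (ih2.add icross').add i3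
    · change ∫ ω, (S ω + a k ω * (D ω ^ 2 - h)) ^ 2 ∂μ ≤ _
      simp_rw [expand]
      have e5 : ∫ ω, ((S ω ^ 2 + 2 * (S ω * a k ω * (D ω ^ 2 - h))) +
          (a k ω * (D ω ^ 2 - h)) ^ 2) ∂μ =
          ∫ ω, (S ω ^ 2 + 2 * (S ω * a k ω * (D ω ^ 2 - h))) ∂μ +
          ∫ ω, (a k ω * (D ω ^ 2 - h)) ^ 2 ∂μ := integral_add (ih2.add icross') i3
      have e6 : ∫ ω, (S ω ^ 2 + 2 * (S ω * a k ω * (D ω ^ 2 - h))) ∂μ =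
          ∫ ω, S ω ^ 2 ∂μ + ∫ ω, 2 * (S ω * a k ω * (D ω ^ 2 - h)) ∂μ := integral_add ih2 icross'
      rw [e5, e6, ecross']
      push_cast
      linarith

end BM


/-! ### A uniform integrability lemma and the discrete Itô formula -/

section UI

variable {Ω' : Type*} {mΩ' : MeasurableSpace Ω'} {μ : Measure Ω'}

lemma integrable_of_sq [IsProbabilityMeasure μ] {M : Ω' → ℝ} (hM : AEStronglyMeasurable M μ)
    {C : ℝ} (hb : ∫⁻ ω, ENNReal.ofReal (M ω ^ 2) ∂μ ≤ ENNReal.ofReal C) :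
    Integrable (fun ω => M ω ^ 2) μ ∧ Integrable M μ := by
  have h2 : Integrable (fun ω => M ω ^ 2) μ := by
    refine ⟨hM.pow 2, ?_⟩
    rw [hasFiniteIntegral_iff_ofReal (Eventually.of_forall fun ω => sq_nonneg _)]
    exact hb.trans_lt ENNReal.ofReal_lt_top
  refine ⟨h2, (h2.add (integrable_const 1)).mono' hM (Eventually.of_forall fun ω => ?_)⟩
  simp only [Pi.add_apply, Real.norm_eq_abs]
  rw [← sq_abs]; nlinarith [sq_nonneg (|M ω| - 1)]

lemma trunc_bound [IsProbabilityMeasure μ] {M : Ω' → ℝ} {Z : Ω' → ℂ}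
    (hM : AEStronglyMeasurable M μ) (hZ : AEStronglyMeasurable Z μ)
    (hM0 : ∀ ω, 0 ≤ M ω) (hZ1 : ∀ ω, ‖Z ω‖ ≤ 1) {C : ℝ} (hC : 0 ≤ C)
    (hb : ∫⁻ ω, ENNReal.ofReal (M ω ^ 2) ∂μ ≤ ENNReal.ofReal C) {R : ℝ} (hR : 0 < R) :
    ‖∫ ω, (M ω : ℂ) * Z ω ∂μ - ∫ ω, ((min (M ω) R : ℝ) : ℂ) * Z ω ∂μ‖ ≤ C / R := by
  obtain ⟨i2, i1⟩ := integrable_of_sq hM hb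
  have e2 : ∫ ω, M ω ^ 2 ∂μ ≤ C := by
    rw [integral_eq_lintegral_of_nonneg_ae (Eventually.of_forall fun ω => sq_nonneg _) i2.1]
    exact ENNReal.toReal_le_of_le_ofReal hC hb
  have hMc : AEStronglyMeasurable (fun ω => (M ω : ℂ)) μ :=
    Complex.continuous_ofReal.comp_aestronglyMeasurable hM
  have hmin : AEStronglyMeasurable (fun ω => min (M ω) R) μ :=
    hM.inf aestronglyMeasurable_const
  have hminc : AEStronglyMeasurable (fun ω => ((min (M ω) R : ℝ) : ℂ)) μ :=
    Complex.continuous_ofReal.comp_aestronglyMeasurable hmin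
  have ia : Integrable (fun ω => (M ω : ℂ) * Z ω) μ := by
    refine i1.mono' (hMc.mul hZ) (Eventually.of_forall fun ω => ?_)
    rw [norm_mul, Complex.norm_real, Real.norm_eq_abs, abs_of_nonneg (hM0 ω)]
    nlinarith [hZ1 ω, hM0 ω, norm_nonneg (Z ω)]
  have ib : Integrable (fun ω => ((min (M ω) R : ℝ) : ℂ) * Z ω) μ := by
    refine i1.mono' (hminc.mul hZ) (Eventually.of_forall fun ω => ?_)
    have h0 : 0 ≤ min (M ω) R := le_min (hM0 ω) hR.le
    rw [norm_mul, Complex.norm_real, Real.norm_eq_abs, abs_of_nonneg h0]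
    have := min_le_left (M ω) R
    nlinarith [hZ1 ω, hM0 ω, norm_nonneg (Z ω)]
  rw [← integral_sub ia ib]
  calc _ ≤ ∫ ω, M ω ^ 2 / R ∂μ := by
        refine norm_integral_le_of_norm_le (i2.div_const R) (Eventually.of_forall fun ω => ?_)
        rw [← sub_mul, norm_mul, ← Complex.ofReal_sub, Complex.norm_real, Real.norm_eq_abs,
          abs_of_nonneg (by linarith [min_le_left (M ω) R])]
        have h1 : M ω - min (M ω) R ≤ M ω ^ 2 / R := by
          rw [le_div_iff₀ hR]
          rcases min_cases (M ω) R with ⟨h, _⟩ | ⟨h, h'⟩ <;> rw [h] <;> nlinarith [hM0 ω]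
        have h2 : 0 ≤ M ω - min (M ω) R := by linarith [min_le_left (M ω) R]
        nlinarith [hZ1 ω, norm_nonneg (Z ω)]
    _ = (∫ ω, M ω ^ 2 ∂μ) / R := integral_div _ _
    _ ≤ C / R := by gcongr

lemma ui_lim [IsProbabilityMeasure μ] {M : ℕ → Ω' → ℝ} {M' : Ω' → ℝ} {Z : ℕ → Ω' → ℂ}
    {Z' : Ω' → ℂ}
    (hM : ∀ n, AEStronglyMeasurable (M n) μ) (hZ : ∀ n, AEStronglyMeasurable (Z n) μ)
    (hM0 : ∀ n ω, 0 ≤ M n ω) (hZ1 : ∀ n ω, ‖Z n ω‖ ≤ 1)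
    (hM0' : ∀ ω, 0 ≤ M' ω) (hZ1' : ∀ ω, ‖Z' ω‖ ≤ 1) {C : ℝ} (hC : 0 ≤ C)
    (hb : ∀ n, ∫⁻ ω, ENNReal.ofReal (M n ω ^ 2) ∂μ ≤ ENNReal.ofReal C)
    (hlM : ∀ᵐ ω ∂μ, Tendsto (fun n => M n ω) atTop (nhds (M' ω)))
    (hlZ : ∀ᵐ ω ∂μ, Tendsto (fun n => Z n ω) atTop (nhds (Z' ω))) :
    AEStronglyMeasurable M' μ ∧ ∫⁻ ω, ENNReal.ofReal (M' ω ^ 2) ∂μ ≤ ENNReal.ofReal C ∧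
    Tendsto (fun n => ∫ ω, (M n ω : ℂ) * Z n ω ∂μ) atTop (nhds (∫ ω, (M' ω : ℂ) * Z' ω ∂μ)) := by
  have hM' : AEStronglyMeasurable M' μ := aestronglyMeasurable_of_tendsto_ae _ hM hlM
  have hZ' : AEStronglyMeasurable Z' μ := aestronglyMeasurable_of_tendsto_ae _ hZ hlZ
  have hb' : ∫⁻ ω, ENNReal.ofReal (M' ω ^ 2) ∂μ ≤ ENNReal.ofReal C := by
    have h1 : ∫⁻ ω, ENNReal.ofReal (M' ω ^ 2) ∂μ =
        ∫⁻ ω, liminf (fun n => ENNReal.ofReal (M n ω ^ 2)) atTop ∂μ := by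
      refine lintegral_congr_ae ?_
      filter_upwards [hlM] with ω h
      exact ((ENNReal.continuous_ofReal.tendsto _).comp (h.pow 2)).liminf_eq.symm
    rw [h1]
    refine (lintegral_liminf_le' fun n => ?_).trans ?_
    · exact ((hM n).aemeasurable.pow_const 2).ennreal_ofReal
    · exact liminf_le_of_frequently_le' (Frequently.of_forall hb)
  refine ⟨hM', hb', ?_⟩
  rw [Metric.tendsto_atTop]
  intro ε hε
  obtain ⟨R, hR, hRC⟩ : ∃ R : ℝ, 0 < R ∧ C / R < ε / 3 := by
    refine ⟨3 * (C + 1) / ε, by positivity, ?_⟩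
    rw [div_div_eq_mul_div, div_lt_iff₀ (by positivity)]
    nlinarith
  have hbdd : Tendsto (fun n => ∫ ω, ((min (M n ω) R : ℝ) : ℂ) * Z n ω ∂μ) atTop
      (nhds (∫ ω, ((min (M' ω) R : ℝ) : ℂ) * Z' ω ∂μ)) := by
    refine tendsto_integral_of_dominated_convergence (fun _ => R) (fun n => ?_)
      (integrable_const _) (fun n => Eventually.of_forall fun ω => ?_) ?_
    · have hmin : AEStronglyMeasurable (fun ω => min (M n ω) R) μ :=
        (hM n).inf aestronglyMeasurable_const
      exact (Complex.continuous_ofReal.comp_aestronglyMeasurable hmin).mul (hZ n)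
    · have h0 : 0 ≤ min (M n ω) R := le_min (hM0 n ω) hR.le
      rw [norm_mul, Complex.norm_real, Real.norm_eq_abs, abs_of_nonneg h0]
      have := min_le_right (M n ω) R
      nlinarith [hZ1 n ω, norm_nonneg (Z n ω)]
    · filter_upwards [hlM, hlZ] with ω h1 h2
      exact ((Complex.continuous_ofReal.tendsto _).comp (h1.min tendsto_const_nhds)).mul h2
  rw [Metric.tendsto_atTop] at hbdd
  obtain ⟨N, hN⟩ := hbdd (ε / 3) (by positivity)
  refine ⟨N, fun n hn => ?_⟩
  have t1 := trunc_bound (hM n) (hZ n) (hM0 n) (hZ1 n) hC (hb n) hR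
  have t2 := trunc_bound hM' hZ' hM0' hZ1' hC hb' hR
  have t3 := hN n hn
  rw [← dist_eq_norm] at t1 t2
  rw [dist_comm] at t2
  calc _ ≤ _ := dist_triangle4 _ (∫ ω, ((min (M n ω) R : ℝ) : ℂ) * Z n ω ∂μ)
        (∫ ω, ((min (M' ω) R : ℝ) : ℂ) * Z' ω ∂μ) _
    _ < ε := by linarith

lemma exists_subseq_of_L1 {Z : ℕ → Ω' → ℝ} (hZ : ∀ n, Integrable (Z n) μ) {b : ℕ → ℝ}
    (hb : Tendsto b atTop (nhds 0)) (hZb : ∀ n, ∫ ω, |Z n ω| ∂μ ≤ b n) :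
    ∃ ns : ℕ → ℕ, StrictMono ns ∧
      ∀ᵐ ω ∂μ, Tendsto (fun k => Z (ns k) ω) atTop (nhds 0) := by
  have : TendstoInMeasure μ Z atTop (fun _ => 0) := by
    refine tendstoInMeasure_of_tendsto_eLpNorm (p := 1) one_ne_zero (fun n => (hZ n).1)
      aestronglyMeasurable_const ?_
    have h0 : Tendsto (fun n => ENNReal.ofReal (b n)) atTop (nhds 0) := by
      have := (ENNReal.continuous_ofReal.tendsto 0).comp hb
      simpa [Function.comp_def] using this
    refine tendsto_of_tendsto_of_tendsto_of_le_of_le tendsto_const_nhds h0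
      (fun _ => zero_le) (fun n => ?_)
    have e : (Z n - fun _ => (0 : ℝ)) = Z n := by ext; simp
    simp only [e]
    rw [eLpNorm_one_eq_lintegral_enorm, ← ofReal_integral_norm_eq_lintegral_enorm (hZ n)]
    exact ENNReal.ofReal_le_ofReal (hZb n)
  exact this.exists_seq_tendsto_ae

end UI

section Ito

variable {Ω' : Type*} {mΩ' : MeasurableSpace Ω'} {μ : Measure Ω'} {F : ℝ → MeasurableSpace Ω'}
  {W Y : ℝ → Ω' → ℝ}

/-- The error in the discrete Itô formula. -/
def itoErr (Y : ℝ → Ω' → ℝ) (e h : ℝ) (n : ℕ) (ω : Ω') : ℝ :=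
  ∑ i ∈ Finset.range n, (fE e (Y (((i : ℝ) + 1) * h) ω) - fE e (Y (i * h) ω) -
    pE e (Y (i * h) ω) * (Y (((i : ℝ) + 1) * h) ω - Y (i * h) ω) -
    phiE e (Y (i * h) ω) / 2 * h)

lemma ito_term_bound {e : ℝ} (he : 0 < e) {lam h x y' d : ℝ} (hl : 0 ≤ lam) (hh : 0 ≤ h)
    (hd : |(y' - x) - d| ≤ lam * h) :
    |fE e y' - fE e x - pE e x * (y' - x) - phiE e x / 2 * d ^ 2| ≤
      4 * (|d| ^ 3 + (lam * h) ^ 3) / e ^ 2 + (2 * |d| * (lam * h) + (lam * h) ^ 2) / e := by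
  have h1 := fE_taylor he x (y' - x)
  rw [show x + (y' - x) = y' by ring] at h1
  set D := y' - x with hD
  have hlh : 0 ≤ lam * h := by positivity
  have hDle : |D| ≤ |d| + lam * h := by
    have := abs_add_le (D - d) d
    rw [sub_add_cancel] at this; linarith
  have h3 : |D| ^ 3 ≤ 4 * (|d| ^ 3 + (lam * h) ^ 3) := by
    calc |D| ^ 3 ≤ (|d| + lam * h) ^ 3 := pow_le_pow_left₀ (abs_nonneg _) hDle 3
      _ ≤ _ := by
        have hd0 := abs_nonneg d
        nlinarith [mul_nonneg (add_nonneg hd0 hlh) (sq_nonneg (|d| - lam * h))]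
  have h4 : |D ^ 2 - d ^ 2| ≤ 2 * |d| * (lam * h) + (lam * h) ^ 2 := by
    have : D ^ 2 - d ^ 2 = (D - d) * (D + d) := by ring
    rw [this, abs_mul]
    have h5 : |D + d| ≤ 2 * |d| + lam * h := by
      have := abs_add_le D d; linarith
    calc _ ≤ (lam * h) * (2 * |d| + lam * h) := mul_le_mul hd h5 (abs_nonneg _) hlh
      _ = _ := by ring
  have h6 : |phiE e x / 2| ≤ 1 / e := by
    rw [abs_of_nonneg (by have := phiE_nonneg he x; positivity)]
    have := phiE_le he x
    rw [div_le_iff₀ (by norm_num)]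
    calc _ ≤ 2 / e := this
      _ = _ := by ring
  have h7 : |phiE e x / 2 * (D ^ 2 - d ^ 2)| ≤ (2 * |d| * (lam * h) + (lam * h) ^ 2) / e := by
    rw [abs_mul]
    calc _ ≤ 1 / e * (2 * |d| * (lam * h) + (lam * h) ^ 2) :=
          mul_le_mul h6 h4 (abs_nonneg _) (by positivity)
      _ = _ := by ring
  have h8 : |D| ^ 3 / e ^ 2 ≤ 4 * (|d| ^ 3 + (lam * h) ^ 3) / e ^ 2 := by gcongr
  have : fE e y' - fE e x - pE e x * D - phiE e x / 2 * d ^ 2 =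
    (fE e y' - fE e x - pE e x * D - phiE e x / 2 * D ^ 2) + phiE e x / 2 * (D ^ 2 - d ^ 2) := by
    ring
  rw [this]
  exact (abs_add_le _ _).trans (by linarith)

lemma ito_L1 [IsProbabilityMeasure μ] (hW : IsBM μ F W)
    (hYm : ∀ t : ℝ, 0 ≤ t → Measurable[F t] (Y t)) {lam : ℝ} (hl : 0 ≤ lam)
    (hinc : ∀ᵐ ω ∂μ, ∀ s t : ℝ, 0 ≤ s → s ≤ t →
      |(Y t ω - Y s ω) - (W t ω - W s ω)| ≤ lam * (t - s))
    {e : ℝ} (he : 0 < e) {h : ℝ} (hh : 0 ≤ h) (n : ℕ) {t : ℝ} (hnt : n * h ≤ t) {r : ℝ}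
    (hr : 0 < r) (hr' : Real.sqrt h ≤ r) :
    Integrable (itoErr Y e h n) μ ∧
    ∫ ω, |itoErr Y e h n ω| ∂μ ≤
      t * (4 * (Real.sqrt h * cp 3 + lam ^ 3 * h ^ 2) / e ^ 2 +
        (2 * lam * Real.sqrt h * cp 1 + lam ^ 2 * h) / e) +
      (t * ((1 / e) ^ 2 * (2 * cp 4 + 2)) * r + r) / 2 := by
  have hY' : ∀ t : ℝ, 0 ≤ t → Measurable (Y t) := fun t ht => (hYm t ht).mono (hW.le t) le_rfl
  have hi0 : ∀ i : ℕ, 0 ≤ (i : ℝ) * h := fun i => by positivity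
  have hi1 : ∀ i : ℕ, 0 ≤ ((i : ℝ) + 1) * h := fun i => by positivity
  have hle : ∀ i : ℕ, (i : ℝ) * h ≤ ((i : ℝ) + 1) * h := fun i => by nlinarith
  have hdf : ∀ i : ℕ, ((i : ℝ) + 1) * h - i * h = h := fun i => by ring
  set D : ℕ → Ω' → ℝ := fun i ω => W (((i : ℝ) + 1) * h) ω - W (i * h) ω with hD
  set a : ℕ → Ω' → ℝ := fun i ω => phiE e (Y (i * h) ω) / 2 with ha
  have haF : ∀ i : ℕ, Measurable[F (i * h)] (a i) := fun i =>
    Measurable.div_const ((continuous_phiE e).measurable.comp (hYm _ (hi0 i))) 2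
  have haC : ∀ i ω, |a i ω| ≤ 1 / e := by
    intro i ω
    simp only [ha]
    rw [abs_of_nonneg (by have := phiE_nonneg he (Y (i * h) ω); positivity)]
    have := phiE_le he (Y (i * h) ω)
    rw [div_le_iff₀ (by norm_num)]
    calc _ ≤ 2 / e := this
      _ = _ := by ring
  obtain ⟨q1, q2, q3⟩ := quad_L2 hW hh haF haC n
  set B : Ω' → ℝ := fun ω => ∑ i ∈ Finset.range n, a i ω * (D i ω ^ 2 - h) with hB
  have hBm : Measurable B := q1.mono (hW.le _) le_rfl
  set T : ℕ → Ω' → ℝ := fun i ω => 4 * (|D i ω| ^ 3 + (lam * h) ^ 3) / e ^ 2 +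
      (2 * |D i ω| * (lam * h) + (lam * h) ^ 2) / e with hT
  have hTi : ∀ i, Integrable (T i) μ ∧ ∫ ω, T i ω ∂μ =
      4 * (Real.sqrt h ^ 3 * cp 3 + (lam * h) ^ 3) / e ^ 2 +
      (2 * (Real.sqrt h * cp 1) * (lam * h) + (lam * h) ^ 2) / e := by
    intro i
    obtain ⟨i3, e3⟩ := hW.moment (hi0 i) (hle i) 3 (by norm_num)
    obtain ⟨i1, e1⟩ := hW.moment (hi0 i) (hle i) 1 (by norm_num)
    rw [hdf] at e3 e1
    simp only [pow_one] at i1 e1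
    have j1 : Integrable (fun ω => 4 * (|D i ω| ^ 3 + (lam * h) ^ 3) / e ^ 2) μ :=
      ((i3.add (integrable_const _)).const_mul 4).div_const _
    have j2 : Integrable (fun ω => (2 * |D i ω| * (lam * h) + (lam * h) ^ 2) / e) μ :=
      (((i1.const_mul 2).mul_const _).add (integrable_const _)).div_const _
    refine ⟨j1.add j2, ?_⟩
    simp only [hT]
    rw [integral_add j1 j2, integral_div, integral_div, integral_const_mul,
      integral_add i3 (integrable_const _),
      integral_add ((i1.const_mul 2).mul_const _) (integrable_const _), integral_mul_const,
      integral_const_mul, e3, e1]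
    simp
  have hdom : ∀ᵐ ω ∂μ, |itoErr Y e h n ω| ≤ (∑ i ∈ Finset.range n, T i ω) +
      (B ω ^ 2 / r + r) / 2 := by
    filter_upwards [hinc] with ω hω
    have hsplit : itoErr Y e h n ω = (∑ i ∈ Finset.range n,
        (fE e (Y (((i : ℝ) + 1) * h) ω) - fE e (Y (i * h) ω) -
        pE e (Y (i * h) ω) * (Y (((i : ℝ) + 1) * h) ω - Y (i * h) ω) -
        phiE e (Y (i * h) ω) / 2 * D i ω ^ 2)) + B ω := by
      simp only [itoErr, hB, ha, ← Finset.sum_add_distrib]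
      refine Finset.sum_congr rfl fun i _ => ?_
      ring
    rw [hsplit]
    refine (abs_add_le _ _).trans (add_le_add ?_ ?_)
    · refine (Finset.abs_sum_le_sum_abs _ _).trans (Finset.sum_le_sum fun i _ => ?_)
      refine ito_term_bound he hl hh ?_
      have := hω _ _ (hi0 i) (hle i)
      rwa [hdf] at this
    · have : (|B ω| - r) ^ 2 / r ≥ 0 := by positivity
      have e1 : (|B ω| - r) ^ 2 / r = B ω ^ 2 / r + r - 2 * |B ω| := by
        rw [← sq_abs (B ω)]; field_simp; ring
      linarith
  have hdomi : Integrable (fun ω => (∑ i ∈ Finset.range n, T i ω) + (B ω ^ 2 / r + r) / 2) μ :=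
    (integrable_finsetSum _ fun i _ => (hTi i).1).add
      (((q2.div_const r).add (integrable_const r)).div_const 2)
  have hmeas : Measurable (itoErr Y e h n) := by
    unfold itoErr
    refine Finset.measurable_sum _ fun i _ => ?_
    have m1 := hY' _ (hi1 i)
    have m2 := hY' _ (hi0 i)
    have c1 := (continuous_fE e).measurable
    have c2 := (continuous_pE e).measurable
    have c3 := (continuous_phiE e).measurable
    fun_prop
  have hIntg : Integrable (itoErr Y e h n) μ := hdomi.mono' hmeas.aestronglyMeasurable hdom
  refine ⟨hIntg, (integral_mono_ae hIntg.abs hdomi hdom).trans ?_⟩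
  have s1 : ∫ ω, ((∑ i ∈ Finset.range n, T i ω) + (B ω ^ 2 / r + r) / 2) ∂μ =
      n * (4 * (Real.sqrt h ^ 3 * cp 3 + (lam * h) ^ 3) / e ^ 2 +
      (2 * (Real.sqrt h * cp 1) * (lam * h) + (lam * h) ^ 2) / e) +
      ((∫ ω, B ω ^ 2 ∂μ) / r + r) / 2 := by
    have e5 : ∫ ω, ((∑ i ∈ Finset.range n, T i ω) + (B ω ^ 2 / r + r) / 2) ∂μ =
        (∫ ω, (∑ i ∈ Finset.range n, T i ω) ∂μ) + ∫ ω, (B ω ^ 2 / r + r) / 2 ∂μ :=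
      integral_add (integrable_finsetSum _ fun i _ => (hTi i).1)
        (((q2.div_const r).add (integrable_const r)).div_const 2)
    rw [e5, integral_finsetSum _ fun i _ => (hTi i).1]
    congr 1
    · simp only [(hTi _).2, Finset.sum_const, Finset.card_range, nsmul_eq_mul]
    · have : ∫ ω, (B ω ^ 2 / r + r) ∂μ = (∫ ω, B ω ^ 2 ∂μ) / r + r := by
        have := integral_add (q2.div_const r) (integrable_const (μ := μ) r)
        rw [integral_div, integral_const] at this
        refine this.trans ?_
        simp [hB, hD]
      rw [integral_div, this]
  rw [s1]
  have sq3 : Real.sqrt h ^ 3 = Real.sqrt h * h := by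
    rw [show Real.sqrt h ^ 3 = Real.sqrt h * Real.sqrt h ^ 2 by ring, Real.sq_sqrt hh]
  have c1 := cp_nonneg 1
  have c3 := cp_nonneg 3
  have c4 := cp_nonneg 4
  have hs := Real.sqrt_nonneg h
  refine add_le_add ?_ ?_
  · rw [sq3]
    have : n * (4 * (Real.sqrt h * h * cp 3 + (lam * h) ^ 3) / e ^ 2 +
      (2 * (Real.sqrt h * cp 1) * (lam * h) + (lam * h) ^ 2) / e) =
      (n * h) * (4 * (Real.sqrt h * cp 3 + lam ^ 3 * h ^ 2) / e ^ 2 +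
        (2 * lam * Real.sqrt h * cp 1 + lam ^ 2 * h) / e) := by ring
    rw [this]
    gcongr
  · have hhr : h ≤ r * r := by
      calc h = Real.sqrt h * Real.sqrt h := (Real.mul_self_sqrt hh).symm
        _ ≤ r * r := by gcongr
    have : (∫ ω, B ω ^ 2 ∂μ) / r ≤ t * ((1 / e) ^ 2 * (2 * cp 4 + 2)) * r := by
      rw [div_le_iff₀ hr]
      refine q3.trans ?_
      have : (n : ℝ) * ((1 / e) ^ 2 * ((2 * cp 4 + 2) * h ^ 2)) =
        (n * h) * ((1 / e) ^ 2 * (2 * cp 4 + 2)) * h := by ring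
      rw [this, mul_assoc _ r r]
      have ht0 : 0 ≤ t := (by positivity : 0 ≤ n * h).trans hnt
      gcongr
    linarith

lemma ito_subseq [IsProbabilityMeasure μ] (hW : IsBM μ F W)
    (hYm : ∀ t : ℝ, 0 ≤ t → Measurable[F t] (Y t)) {lam : ℝ} (hl : 0 ≤ lam)
    (hinc : ∀ᵐ ω ∂μ, ∀ s t : ℝ, 0 ≤ s → s ≤ t →
      |(Y t ω - Y s ω) - (W t ω - W s ω)| ≤ lam * (t - s))
    {e : ℝ} (he : 0 < e) {t : ℝ} (ht : 0 ≤ t) :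
    ∃ ns : ℕ → ℕ, StrictMono ns ∧
      ∀ᵐ ω ∂μ, Tendsto (fun k => itoErr Y e (t / (ns k)) (ns k) ω) atTop (nhds 0) := by
  have hr0 : ∀ n : ℕ, 0 < Real.sqrt (t / n) + 1 / ((n : ℝ) + 1) := fun n => by positivity
  have H := fun n : ℕ => ito_L1 hW hYm hl hinc he (h := t / n) (by positivity) n (t := t)
    (by
      rcases Nat.eq_zero_or_pos n with h | h
      · subst h; simpa using ht
      · rw [mul_div_cancel₀]; positivity) (hr0 n) (by
        have : 0 < 1 / ((n : ℝ) + 1) := by positivity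
        linarith)
  refine exists_subseq_of_L1 (Z := fun n => itoErr Y e (t / n) n) (fun n => (H n).1) ?_
    (fun n => (H n).2)
  have h1 : Tendsto (fun n : ℕ => t / (n : ℝ)) atTop (nhds 0) :=
    tendsto_const_div_atTop_nhds_zero_nat t
  have h2 : Tendsto (fun n : ℕ => 1 / ((n : ℝ) + 1)) atTop (nhds 0) :=
    tendsto_one_div_add_atTop_nhds_zero_nat
  have hc : Continuous (fun p : ℝ × ℝ => t * (4 * (Real.sqrt p.1 * cp 3 + lam ^ 3 * p.1 ^ 2) / e ^ 2 +
        (2 * lam * Real.sqrt p.1 * cp 1 + lam ^ 2 * p.1) / e) +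
      (t * ((1 / e) ^ 2 * (2 * cp 4 + 2)) * (Real.sqrt p.1 + p.2) + (Real.sqrt p.1 + p.2)) / 2) := by
    fun_prop
  have := (hc.tendsto (0, 0)).comp (h1.prodMk_nhds h2)
  simpa [Function.comp_def] using this

end Ito


section Key

variable {Ω' : Type*} {mΩ' : MeasurableSpace Ω'} {μ : Measure Ω'} {F : ℝ → MeasurableSpace Ω'}
  {W Y : ℝ → Ω' → ℝ}

/-- Discrete exponential density. -/
def dM (W : ℝ → Ω' → ℝ) (lam h : ℝ) (σ : ℕ → Ω' → ℝ) (n : ℕ) (ω : Ω') : ℝ :=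
  Real.exp (lam * (∑ i ∈ Finset.range n, σ i ω * (W (((i : ℝ) + 1) * h) ω - W (i * h) ω)) -
    lam ^ 2 / 2 * ∑ i ∈ Finset.range n, σ i ω ^ 2 * h)

/-- Discrete character. -/
def dZ (W : ℝ → Ω' → ℝ) (lam h : ℝ) (σ : ℕ → Ω' → ℝ) (θ : ℕ → ℝ) (n : ℕ) (ω : Ω') : ℂ :=
  Complex.exp (Complex.I * ((∑ i ∈ Finset.range n,
    θ i * (W (((i : ℝ) + 1) * h) ω - W (i * h) ω - lam * (σ i ω * h)) : ℝ) : ℂ))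

lemma disc [IsProbabilityMeasure μ] (hW : IsBM μ F W) {h : ℝ} (hh : 0 ≤ h)
    {σ : ℕ → Ω' → ℝ} (hσ : ∀ i : ℕ, Measurable[F (i * h)] (σ i)) (hσ1 : ∀ i ω, |σ i ω| ≤ 1)
    (lam : ℝ) {θ : ℕ → ℝ} {K : ℝ} (hθ : ∀ i, |θ i| ≤ K) (n : ℕ) :
    Measurable (dM W lam h σ n) ∧ Measurable (dZ W lam h σ θ n) ∧
    ((∫ ω, (dM W lam h σ n ω : ℂ) * dZ W lam h σ θ n ω ∂μ) *
      Complex.exp ((∑ i ∈ Finset.range n, θ i ^ 2 * h / 2 : ℝ) : ℂ) = 1) ∧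
    ∫⁻ ω, ENNReal.ofReal (dM W lam h σ n ω ^ 2) ∂μ ≤
      ENNReal.ofReal (Real.exp (lam ^ 2 * (n * h))) := by
  have hi0 : ∀ i : ℕ, 0 ≤ (i : ℝ) * h := fun i => by positivity
  have hi1 : ∀ i : ℕ, 0 ≤ ((i : ℝ) + 1) * h := fun i => by positivity
  have hσm : ∀ i, Measurable (σ i) := fun i => (hσ i).mono (hW.le _) le_rfl
  have hWi : ∀ i : ℕ, Measurable (fun ω => W (((i : ℝ) + 1) * h) ω - W (i * h) ω) :=
    fun i => hW.meas_inc (hi0 i) (hi1 i)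
  have mM : Measurable (dM W lam h σ n) := by
    unfold dM
    refine Real.measurable_exp.comp (((Finset.measurable_sum _ fun i _ =>
      (hσm i).mul (hWi i)).const_mul _).sub ((Finset.measurable_sum _ fun i _ =>
      ((hσm i).pow_const 2).mul_const _).const_mul _))
  have mZ : Measurable (dZ W lam h σ θ n) := by
    unfold dZ
    refine Complex.measurable_exp.comp ((Complex.measurable_ofReal.comp
      (Finset.measurable_sum _ fun i _ =>
      ((hWi i).sub (((hσm i).mul_const h).const_mul lam)).const_mul _)).const_mul _)
  refine ⟨mM, mZ, ?_, ?_⟩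
  · have hz : ∀ i : ℕ, Measurable[F (i * h)]
        (fun ω => ((lam * σ i ω : ℝ) : ℂ) + Complex.I * (θ i : ℂ)) := fun i =>
      (Complex.measurable_ofReal.comp ((hσ i).const_mul lam)).add_const _
    have hK : ∀ i ω, ‖((lam * σ i ω : ℝ) : ℂ) + Complex.I * (θ i : ℂ)‖ ≤ |lam| + K := by
      intro i ω
      refine (norm_add_le _ _).trans (add_le_add ?_ ?_)
      · rw [Complex.norm_real, Real.norm_eq_abs, abs_mul]
        exact mul_le_of_le_one_right (abs_nonneg _) (hσ1 i ω)
      · rw [norm_mul, Complex.norm_I, one_mul, Complex.norm_real]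
        exact hθ i
    have := (expmart hW hh hz hK n).2.2
    rw [← this, ← integral_mul_const]
    refine integral_congr_ae (Eventually.of_forall fun ω => ?_)
    simp only
    rw [← Complex.exp_sum, dM, dZ, Complex.ofReal_exp, ← Complex.exp_add, ← Complex.exp_add]
    congr 1
    push_cast
    simp only [Finset.mul_sum, ← Finset.sum_add_distrib, ← Finset.sum_sub_distrib]
    refine Finset.sum_congr rfl fun i _ => ?_
    ring_nf
    simp only [Complex.I_sq]
    ring
  · have hz : ∀ i : ℕ, Measurable[F (i * h)]
        (fun ω => ((2 * lam * σ i ω : ℝ) : ℂ)) := fun i =>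
      (Complex.measurable_ofReal.comp ((hσ i).const_mul (2 * lam)))
    have hK : ∀ i ω, ‖((2 * lam * σ i ω : ℝ) : ℂ)‖ ≤ |2 * lam| := by
      intro i ω
      rw [Complex.norm_real, Real.norm_eq_abs, abs_mul]
      exact mul_le_of_le_one_right (abs_nonneg _) (hσ1 i ω)
    obtain ⟨-, ei, e1⟩ := expmart hW hh hz hK n
    set E : Ω' → ℝ := fun ω => ∏ i ∈ Finset.range n,
      Real.exp (2 * lam * σ i ω * (W (((i : ℝ) + 1) * h) ω - W (i * h) ω) -
        (2 * lam * σ i ω) ^ 2 * h / 2) with hE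
    have hEc : (fun ω => ∏ i ∈ Finset.range n, Complex.exp (((2 * lam * σ i ω : ℝ) : ℂ) *
        ((W (((i : ℝ) + 1) * h) ω - W (i * h) ω : ℝ) : ℂ) -
        ((2 * lam * σ i ω : ℝ) : ℂ) ^ 2 * (h : ℂ) / 2)) = fun ω => ((E ω : ℝ) : ℂ) := by
      ext ω
      simp only [hE]
      push_cast
      rfl
    rw [hEc] at ei e1
    rw [integral_complex_ofReal] at e1
    have e1' : ∫ ω, E ω ∂μ = 1 := by exact_mod_cast e1
    have eiR : Integrable E μ := by simpa using ei.re
    have hle : ∀ ω, dM W lam h σ n ω ^ 2 ≤ E ω * Real.exp (lam ^ 2 * (n * h)) := by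
      intro ω
      simp only [dM, hE]
      rw [← Real.exp_sum, ← Real.exp_nat_mul, ← Real.exp_add]
      refine Real.exp_le_exp.2 ?_
      have h1 : ∑ i ∈ Finset.range n, σ i ω ^ 2 * h ≤ n * h := by
        refine (Finset.sum_le_card_nsmul _ _ h fun i _ => ?_).trans (by simp)
        have := (sq_le_one_iff_abs_le_one _).2 (hσ1 i ω)
        nlinarith
      have h2 : ∑ i ∈ Finset.range n, (2 * lam * σ i ω *
          (W (((i : ℝ) + 1) * h) ω - W (i * h) ω) - (2 * lam * σ i ω) ^ 2 * h / 2) =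
          2 * lam * (∑ i ∈ Finset.range n, σ i ω * (W (((i : ℝ) + 1) * h) ω - W (i * h) ω)) -
          2 * lam ^ 2 * ∑ i ∈ Finset.range n, σ i ω ^ 2 * h := by
        simp only [Finset.mul_sum, ← Finset.sum_sub_distrib]
        refine Finset.sum_congr rfl fun i _ => ?_
        ring
      rw [h2]
      push_cast
      nlinarith [sq_nonneg lam]
    calc _ ≤ ∫⁻ ω, ENNReal.ofReal (E ω * Real.exp (lam ^ 2 * (n * h))) ∂μ :=
          lintegral_mono fun ω => ENNReal.ofReal_le_ofReal (hle ω)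
      _ = ENNReal.ofReal (∫ ω, E ω * Real.exp (lam ^ 2 * (n * h)) ∂μ) := by
          refine (ofReal_integral_eq_lintegral_ofReal (eiR.mul_const _)
            (Eventually.of_forall fun ω => ?_)).symm
          simp only [hE, Pi.zero_apply]
          refine mul_nonneg (Finset.prod_nonneg fun i _ => (Real.exp_pos _).le)
            (Real.exp_pos _).le
      _ = _ := by rw [integral_mul_const, e1', one_mul]

lemma sum_theta {ι : Type*} [Fintype ι] (θ : ι → ℝ) (K : ι → ℕ) (n : ℕ) (hK : ∀ j, K j ≤ n)
    (x : ℕ → ℝ) :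
    ∑ i ∈ Finset.range n, (∑ j, if i < K j then θ j else 0) * x i =
      ∑ j, θ j * ∑ i ∈ Finset.range (K j), x i := by
  simp only [Finset.sum_mul, Finset.mul_sum]
  rw [Finset.sum_comm]
  refine Finset.sum_congr rfl fun j _ => ?_
  have : Finset.range (K j) = (Finset.range n).filter (fun i => i < K j) := by
    ext i; simp; intro h; exact h.trans_le (hK j)
  rw [this, Finset.sum_filter]
  refine Finset.sum_congr rfl fun i _ => ?_
  split_ifs <;> simp

lemma sum_inc (f : ℝ → ℝ) (h : ℝ) (k : ℕ) :
    ∑ i ∈ Finset.range k, (f (((i : ℝ) + 1) * h) - f (i * h)) = f (k * h) - f 0 := by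
  have := Finset.sum_range_sub (fun i : ℕ => f (i * h)) k
  simpa using this

lemma psgn_intervalIntegrable {Y : ℝ → ℝ} (hY : Continuous Y) (a b : ℝ) :
    IntervalIntegrable (fun s => psgn (Y s)) volume a b := by
  rw [intervalIntegrable_iff]
  exact Measure.integrableOn_of_bounded (M := 1) (by simp)
    (measurable_psgn.comp hY.measurable).aestronglyMeasurable
    (Eventually.of_forall fun x => by simp [Real.norm_eq_abs, abs_psgn])

lemma inc_eq {lam y : ℝ} {W Y : ℝ → ℝ} (hY : Continuous Y)
    (heq : ∀ t : ℝ, 0 ≤ t → Y t = y - lam * (∫ s in (0:ℝ)..t, psgn (Y s)) + W t)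
    {s t : ℝ} (hs : 0 ≤ s) (hst : s ≤ t) :
    W t - W s = (Y t - Y s) + lam * ∫ r in s..t, psgn (Y r) := by
  have h1 := heq s hs
  have h2 := heq t (hs.trans hst)
  have h3 := intervalIntegral.integral_add_adjacent_intervals
    (psgn_intervalIntegrable hY 0 s) (psgn_intervalIntegrable hY s t)
  rw [← h3] at h2
  rw [h1, h2]
  ring

lemma inc_le {lam y : ℝ} (hl : 0 ≤ lam) {W Y : ℝ → ℝ} (hY : Continuous Y)
    (heq : ∀ t : ℝ, 0 ≤ t → Y t = y - lam * (∫ s in (0:ℝ)..t, psgn (Y s)) + W t)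
    {s t : ℝ} (hs : 0 ≤ s) (hst : s ≤ t) :
    |(Y t - Y s) - (W t - W s)| ≤ lam * (t - s) := by
  rw [inc_eq hY heq hs hst]
  have : Y t - Y s - (Y t - Y s + lam * ∫ r in s..t, psgn (Y r)) =
    -(lam * ∫ r in s..t, psgn (Y r)) := by ring
  rw [this, abs_neg, abs_mul, abs_of_nonneg hl]
  refine mul_le_mul_of_nonneg_left ?_ hl
  have := intervalIntegral.norm_integral_le_of_norm_le_const (a := s) (b := t) (C := 1)
    (f := fun r => psgn (Y r)) (fun r _ => by simp [Real.norm_eq_abs, abs_psgn])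
  rw [one_mul, abs_of_nonneg (sub_nonneg.2 hst)] at this
  exact this

end Key

section Key2

/-- The Girsanov density at regularization level `e`. -/
def mE (lam y t e : ℝ) (Y : ℝ → ℝ) : ℝ :=
  Real.exp (lam * (fE e (Y t) - fE e y - (∫ r in (0:ℝ)..t, phiE e (Y r)) / 2 +
    lam * ∫ r in (0:ℝ)..t, pE e (Y r) * psgn (Y r)) -
    lam ^ 2 / 2 * ∫ r in (0:ℝ)..t, pE e (Y r) ^ 2)

/-- The character at regularization level `e`. -/
def zE {ι : Type*} [Fintype ι] (lam t e : ℝ) (u θ : ι → ℝ) (W Y : ℝ → ℝ) : ℂ :=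
  Complex.exp (Complex.I * ((∑ j, θ j * (W (t * u j) -
    lam * ∫ r in (0:ℝ)..(t * u j), pE e (Y r)) : ℝ) : ℂ))

lemma norm_cexp_I (x : ℝ) : ‖Complex.exp (Complex.I * (x : ℂ))‖ ≤ 1 := by
  rw [mul_comm, Complex.norm_exp_ofReal_mul_I]

lemma floor_le_n {u : ℝ} (hu : u ∈ Icc (0 : ℝ) 1) (n : ℕ) : ⌊u * (n : ℝ)⌋₊ ≤ n := by
  have : u * n ≤ n := mul_le_of_le_one_left (by positivity) hu.2
  exact (Nat.floor_le_floor this).trans (by simp)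

lemma floor_tend {t u : ℝ} (hu : u ∈ Icc (0 : ℝ) 1) :
    Tendsto (fun n : ℕ => (⌊u * (n : ℝ)⌋₊ : ℝ) * (t / n)) atTop (nhds (t * u)) := by
  have h := (tendsto_nat_floor_mul_div_atTop hu.1).comp (tendsto_natCast_atTop_atTop (R := ℝ))
  have h2 := h.const_mul t
  refine h2.congr fun n => ?_
  simp only [Function.comp_apply]
  ring

/-- Path-wise limit of the discrete density. -/
lemma path_M {lam y t e : ℝ} {W Y : ℝ → ℝ} (hY : Continuous Y)
    (heq : ∀ t : ℝ, 0 ≤ t → Y t = y - lam * (∫ s in (0:ℝ)..t, psgn (Y s)) + W t)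
    (hY0 : Y 0 = y) (ht : 0 ≤ t) {ns : ℕ → ℕ} (hns : StrictMono ns)
    (hito : Tendsto (fun k => ∑ i ∈ Finset.range (ns k),
      (fE e (Y (((i : ℝ) + 1) * (t / ns k))) - fE e (Y (i * (t / ns k))) -
        pE e (Y (i * (t / ns k))) * (Y (((i : ℝ) + 1) * (t / ns k)) - Y (i * (t / ns k))) -
        phiE e (Y (i * (t / ns k))) / 2 * (t / ns k))) atTop (nhds 0)) :
    Tendsto (fun k => Real.exp (lam * (∑ i ∈ Finset.range (ns k), pE e (Y (i * (t / ns k))) *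
      (W (((i : ℝ) + 1) * (t / ns k)) - W (i * (t / ns k)))) -
      lam ^ 2 / 2 * ∑ i ∈ Finset.range (ns k), pE e (Y (i * (t / ns k))) ^ 2 * (t / ns k)))
      atTop (nhds (mE lam y t e Y)) := by
  have hu : (1 : ℝ) ∈ Icc (0 : ℝ) 1 := ⟨zero_le_one, le_rfl⟩
  have cp := (continuous_pE e).comp hY
  have cphi := (continuous_phiE e).comp hY
  have r1 := (riemann_tendsto cp (measurable_psgn.comp hY.measurable)
    (fun x => by simp [abs_psgn]) ht hu).comp hns.tendsto_atTop
  have r2 := (riemann_tendsto_one (cp.pow 2) ht hu).comp hns.tendsto_atTop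
  have r3 := (riemann_tendsto_one (cphi.div_const 2) ht hu).comp hns.tendsto_atTop
  simp only [Function.comp_def, one_mul, mul_one, Nat.floor_natCast] at r1 r2 r3
  rw [intervalIntegral.integral_div] at r3
  unfold mE
  have main := (((((tendsto_const_nhds (x := fE e (Y t) - fE e y)).sub r3).sub hito).add
    (r1.const_mul lam)).const_mul lam).sub (r2.const_mul (lam ^ 2 / 2))
  rw [sub_zero] at main
  refine (Real.continuous_exp.tendsto _).comp (main.congr' ?_)
  filter_upwards [hns.tendsto_atTop.eventually_gt_atTop 0] with k hk
  set n := ns k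
  have hn : (n : ℝ) ≠ 0 := by positivity
  have htn : (n : ℝ) * (t / n) = t := by field_simp
  have h0 : 0 ≤ t / (n : ℝ) := by positivity
  congr 2
  have tel := sum_inc (fun s => fE e (Y s)) (t / n) n
  rw [htn, hY0] at tel
  rw [← tel, Finset.mul_sum, ← Finset.sum_sub_distrib, ← Finset.sum_sub_distrib,
    ← Finset.sum_add_distrib]
  refine Finset.sum_congr rfl fun i _ => ?_
  rw [inc_eq hY heq (s := i * (t / n)) (t := (i + 1) * (t / n)) (by positivity) (by nlinarith)]
  ring

lemma path_Z {ι : Type*} [Fintype ι] {lam t e : ℝ} {u θ : ι → ℝ} {W Y : ℝ → ℝ}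
    (hY : Continuous Y) (hW : Continuous W) (hW0 : W 0 = 0) (ht : 0 ≤ t)
    (hu : ∀ j, u j ∈ Icc (0 : ℝ) 1) :
    Tendsto (fun n : ℕ => Complex.exp (Complex.I * ((∑ i ∈ Finset.range n,
      (∑ j, if i < ⌊u j * (n : ℝ)⌋₊ then θ j else 0) *
      (W (((i : ℝ) + 1) * (t / n)) - W (i * (t / n)) - lam * (pE e (Y (i * (t / n))) * (t / n))) :
      ℝ) : ℂ))) atTop (nhds (zE lam t e u θ W Y)) := by
  unfold zE
  have main : Tendsto (fun n : ℕ => ∑ j, θ j * ((W (⌊u j * (n : ℝ)⌋₊ * (t / n)) - W 0) -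
      lam * ∑ i ∈ Finset.range ⌊u j * (n : ℝ)⌋₊, pE e (Y (i * (t / n))) * (t / n))) atTop
      (nhds (∑ j, θ j * (W (t * u j) - lam * ∫ r in (0:ℝ)..(t * u j), pE e (Y r)))) := by
    refine tendsto_finsetSum _ fun j _ => ?_
    have h1 := (hW.tendsto (t * u j)).comp (floor_tend (t := t) (hu j))
    have h2 := riemann_tendsto_one ((continuous_pE e).comp hY) ht (hu j)
    have := ((h1.sub_const (W 0)).sub (h2.const_mul lam)).const_mul (θ j)
    simpa only [hW0, sub_zero, Function.comp_def] using this
  refine (Complex.continuous_exp.tendsto _).comp (Tendsto.const_mul _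
    ((Complex.continuous_ofReal.tendsto _).comp (main.congr fun n => ?_)))
  rw [sum_theta θ _ n (fun j => floor_le_n (hu j) n)]
  refine Finset.sum_congr rfl fun j _ => ?_
  rw [Finset.sum_sub_distrib, sum_inc W, Finset.mul_sum]

variable {Ω' : Type*} {mΩ' : MeasurableSpace Ω'} {P Pstar : Measure Ω'}
  {F : ℝ → MeasurableSpace Ω'} {W Y : ℝ → Ω' → ℝ}

/-- Hypotheses of the theorem without the local time. -/
structure Setup (P Pstar : Measure Ω') (F : ℝ → MeasurableSpace Ω') (W Y : ℝ → Ω' → ℝ)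
    (lam y : ℝ) : Prop where
  hlam : 0 ≤ lam
  hW : IsBM P F W
  hYm : ∀ t : ℝ, 0 ≤ t → Measurable[F t] (Y t)
  hYcont : ∀ᵐ ω ∂P, Continuous fun t => Y t ω
  hYeq : ∀ᵐ ω ∂P, ∀ t : ℝ, 0 ≤ t →
      Y t ω = y - lam * (∫ s in (0:ℝ)..t, psgn (Y s ω)) + W t ω
  hstar : IsBM Pstar (fun t => natSA Y t) (fun t ω => Y t ω - y)

set_option maxHeartbeats 2000000 in
lemma key_eps [IsProbabilityMeasure P] [IsProbabilityMeasure Pstar] {lam y : ℝ}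
    (S : Setup P Pstar F W Y lam y) {ι : Type*} [Fintype ι] {u : ι → ℝ} (θ : ι → ℝ)
    (hu : ∀ j, u j ∈ Icc (0 : ℝ) 1) {t e : ℝ} (ht : 0 ≤ t) (he : 0 < e) :
    AEStronglyMeasurable (fun ω => mE lam y t e (fun s => Y s ω)) P ∧
    AEStronglyMeasurable (fun ω => zE lam t e u θ (fun s => W s ω) (fun s => Y s ω)) P ∧
    ∫⁻ ω, ENNReal.ofReal (mE lam y t e (fun s => Y s ω) ^ 2) ∂P ≤
      ENNReal.ofReal (Real.exp (lam ^ 2 * t)) ∧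
    ∫ ω, ((mE lam y t e (fun s => Y s ω) : ℝ) : ℂ) *
        zE lam t e u θ (fun s => W s ω) (fun s => Y s ω) ∂P =
      ∫ ω, Complex.exp (Complex.I * ((∑ j, θ j * (Y (t * u j) ω - y) : ℝ) : ℂ)) ∂Pstar := by
  obtain ⟨hlam, hW, hYm, hYcont, hYeq, hstar⟩ := S
  have hinc : ∀ᵐ ω ∂P, ∀ s t : ℝ, 0 ≤ s → s ≤ t →
      |(Y t ω - Y s ω) - (W t ω - W s ω)| ≤ lam * (t - s) := by
    filter_upwards [hYcont, hYeq] with ω h1 h2 s t hs hst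
    exact inc_le (W := fun s => W s ω) (Y := fun s => Y s ω) hlam h1 h2 hs hst
  obtain ⟨ns, hns, hito⟩ := ito_subseq hW hYm hlam hinc he ht
  set σ : ℕ → ℕ → Ω' → ℝ := fun n i ω => pE e (Y (i * (t / n)) ω) with hσ
  set Θ : ℕ → ℕ → ℝ := fun n i => ∑ j, if i < ⌊u j * (n : ℝ)⌋₊ then θ j else 0 with hΘ
  have hΘb : ∀ n i, |Θ n i| ≤ ∑ j, |θ j| := by
    intro n i
    refine (Finset.abs_sum_le_sum_abs _ _).trans (Finset.sum_le_sum fun j _ => ?_)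
    split_ifs
    · exact le_rfl
    · simp
  have hth : ∀ n : ℕ, 0 ≤ t / (n : ℝ) := fun n => by positivity
  have D1 := fun n : ℕ => disc hW (hth n) (σ := σ n)
    (fun i => (continuous_pE e).measurable.comp (hYm _ (by positivity)))
    (fun i ω => abs_pE_le he _) lam (hΘb n) n
  have D2 := fun n : ℕ => disc hstar (hth n) (σ := fun _ _ => 0)
    (fun i => measurable_const) (by simp) 0 (hΘb n) n
  have hZ1 : ∀ (n : ℕ) ω, ‖dZ W lam (t / n) (σ n) (Θ n) n ω‖ ≤ 1 := fun n ω => norm_cexp_I _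
  have hlM : ∀ᵐ ω ∂P, Tendsto (fun k => dM W lam (t / ns k) (σ (ns k)) (ns k) ω) atTop
      (nhds (mE lam y t e (fun s => Y s ω))) := by
    filter_upwards [hYcont, hYeq, hito, hW.init] with ω h1 h2 h3 h4
    refine path_M (W := fun s => W s ω) (Y := fun s => Y s ω) h1 h2 ?_ ht hns h3
    have := h2 0 le_rfl
    simpa [h4] using this
  have hlZ0 : ∀ᵐ ω ∂P, Tendsto (fun n : ℕ => dZ W lam (t / n) (σ n) (Θ n) n ω) atTop
      (nhds (zE lam t e u θ (fun s => W s ω) (fun s => Y s ω))) := by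
    filter_upwards [hYcont, hW.cont, hW.init] with ω h1 h2 h3
    exact path_Z (W := fun s => W s ω) (Y := fun s => Y s ω) h1 h2 h3 ht hu
  have hlZ : ∀ᵐ ω ∂P, Tendsto (fun k => dZ W lam (t / ns k) (σ (ns k)) (Θ (ns k)) (ns k) ω) atTop
      (nhds (zE lam t e u θ (fun s => W s ω) (fun s => Y s ω))) := by
    filter_upwards [hlZ0] with ω h
    exact h.comp hns.tendsto_atTop
  have hnt : ∀ n : ℕ, (n : ℝ) * (t / n) ≤ t := by
    intro n
    rcases Nat.eq_zero_or_pos n with h | h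
    · subst h; simpa using ht
    · rw [mul_div_cancel₀]; positivity
  have hb : ∀ n : ℕ, ∫⁻ ω, ENNReal.ofReal (dM W lam (t / n) (σ n) n ω ^ 2) ∂P ≤
      ENNReal.ofReal (Real.exp (lam ^ 2 * t)) := fun n =>
    (D1 n).2.2.2.trans (ENNReal.ofReal_le_ofReal (Real.exp_le_exp.2
      (mul_le_mul_of_nonneg_left (hnt n) (sq_nonneg _))))
  obtain ⟨c1, c2, c3⟩ := ui_lim (M := fun k => dM W lam (t / ns k) (σ (ns k)) (ns k))
    (Z := fun k => dZ W lam (t / ns k) (σ (ns k)) (Θ (ns k)) (ns k))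
    (fun k => (D1 (ns k)).1.aestronglyMeasurable)
    (fun k => (D1 (ns k)).2.1.aestronglyMeasurable)
    (fun k ω => (Real.exp_pos _).le) (fun k ω => hZ1 _ _) (fun ω => (Real.exp_pos _).le)
    (fun ω => norm_cexp_I _) (Real.exp_pos _).le (fun k => hb (ns k)) hlM hlZ
  refine ⟨c1, aestronglyMeasurable_of_tendsto_ae _
    (fun k => (D1 (ns k)).2.1.aestronglyMeasurable) hlZ, c2, ?_⟩
  have heqn : ∀ n : ℕ, ∫ ω, (dM W lam (t / n) (σ n) n ω : ℂ) *
      dZ W lam (t / n) (σ n) (Θ n) n ω ∂P =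
      ∫ ω, dZ (fun t ω => Y t ω - y) 0 (t / n) (fun _ _ => 0) (Θ n) n ω ∂Pstar := by
    intro n
    have h1 := (D1 n).2.2.1
    have h2 := (D2 n).2.2.1
    have h3 := mul_right_cancel₀ (Complex.exp_ne_zero _) (h1.trans h2.symm)
    rw [h3]
    refine integral_congr_ae (Eventually.of_forall fun ω => ?_)
    simp [dM]
  have hlim2 : Tendsto (fun n : ℕ => ∫ ω, dZ (fun t ω => Y t ω - y) 0 (t / n) (fun _ _ => 0)
      (Θ n) n ω ∂Pstar) atTop (nhds (∫ ω, Complex.exp (Complex.I *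
        ((∑ j, θ j * (Y (t * u j) ω - y) : ℝ) : ℂ)) ∂Pstar)) := by
    refine tendsto_integral_of_dominated_convergence (fun _ => 1)
      (fun n => (D2 n).2.1.aestronglyMeasurable) (integrable_const _)
      (fun n => Eventually.of_forall fun ω => norm_cexp_I _) ?_
    filter_upwards [hstar.cont, hstar.init] with ω h1 h2
    have := path_Z (W := fun s => Y s ω - y) (Y := fun s => 0) (lam := 0) (e := 1) (θ := θ)
      continuous_const h1 h2 ht hu
    simp only [zE, zero_mul, sub_zero] at this
    simpa only [dZ, zero_mul, sub_zero] using this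
  refine tendsto_nhds_unique c3 ?_
  have := hlim2.comp hns.tendsto_atTop
  refine this.congr fun k => ?_
  simp only [Function.comp_apply]
  rw [heqn]

end Key2

section Key3

/-- The sequence `1/(k+1)`. -/
def epsk (k : ℕ) : ℝ := 1 / ((k : ℝ) + 1)

lemma epsk_pos (k : ℕ) : 0 < epsk k := by unfold epsk; positivity

lemma epsk_tendsto : Tendsto epsk atTop (nhdsWithin 0 (Ioi 0)) :=
  tendsto_nhdsWithin_iff.2 ⟨tendsto_one_div_add_atTop_nhds_zero_nat,
    Eventually.of_forall fun k => epsk_pos k⟩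

lemma fE_tendsto (x : ℝ) : Tendsto (fun k => fE (epsk k) x) atTop (nhds |x|) := by
  rw [tendsto_iff_norm_sub_tendsto_zero]
  refine squeeze_zero (fun _ => norm_nonneg _) (fun k => abs_fE_sub_le (epsk_pos k) x)
    (tendsto_nhds_of_tendsto_nhdsWithin epsk_tendsto)

lemma abs_psgn_le (x : ℝ) : |psgn x| ≤ 1 := (abs_psgn x).le

lemma psgn_sq (x : ℝ) : psgn x * psgn x = 1 := by unfold psgn; split_ifs <;> norm_num

/-- The limiting density of `Pstar` with respect to `P`. -/
def mL (lam y t Yt Lt : ℝ) : ℝ :=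
  Real.exp (lam * (|Yt| - |y| - 2 * Lt) + lam ^ 2 / 2 * t)

lemma mE_tendsto {lam y t L : ℝ} {Y : ℝ → ℝ} (hY : Continuous Y) (ht : 0 ≤ t)
    (hL : Tendsto (fun ε : ℝ =>
        (4 * ε)⁻¹ * ∫ s in (0:ℝ)..t, (if |Y s| < ε then (1:ℝ) else 0))
      (nhdsWithin 0 (Ioi 0)) (nhds L)) :
    Tendsto (fun k => mE lam y t (epsk k) Y) atTop (nhds (mL lam y t (Y t) L)) := by
  have a1 := (approx_tendsto hY hL (G := fun e x => pE e x * psgn x) (G0 := fun _ => 1)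
    (fun e => (continuous_pE e).measurable.mul measurable_psgn) measurable_const (by simp)
    (fun e he x => by
      have h := abs_pE_sub_psgn_le he x
      have e1 : pE e x * psgn x - 1 = (pE e x - psgn x) * psgn x := by
        rw [sub_mul, psgn_sq]
      simp only [e1]
      rw [abs_mul, abs_psgn, mul_one]
      exact h) (s := t) ⟨ht, le_rfl⟩).comp epsk_tendsto
  have a2 := (approx_tendsto hY hL (G := fun e x => pE e x ^ 2) (G0 := fun _ => 1)
    (fun e => (continuous_pE e).measurable.pow_const 2) measurable_const (by simp)
    (fun e he x => by
      have h1 := abs_pE_le he x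
      by_cases hx : |x| < e
      · rw [if_pos hx]
        have := (sq_le_one_iff_abs_le_one _).2 h1
        rw [abs_le]
        constructor <;> nlinarith [sq_nonneg (pE e x)]
      · rw [if_neg hx, pE_eq_psgn he (not_lt.1 hx), sq, psgn_sq]
        simp) (s := t) ⟨ht, le_rfl⟩).comp epsk_tendsto
  have a3 := (phi_tendsto hY ht hL).comp epsk_tendsto
  have main := ((((((fE_tendsto (Y t)).sub (fE_tendsto y)).sub a3).add
    (a1.const_mul lam)).const_mul lam).sub (a2.const_mul (lam ^ 2 / 2)))
  have := (Real.continuous_exp.tendsto _).comp main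
  have e1 : mL lam y t (Y t) L = Real.exp (lam * (|Y t| - |y| - 2 * L +
      lam * ∫ r in (0:ℝ)..t, (1 : ℝ)) - lam ^ 2 / 2 * ∫ r in (0:ℝ)..t, (1 : ℝ)) := by
    rw [mL]
    congr 1
    simp
    ring
  rw [e1]
  exact this

lemma zE_tendsto {ι : Type*} [Fintype ι] {lam y t L : ℝ} {u θ : ι → ℝ} {W Y : ℝ → ℝ}
    (hY : Continuous Y)
    (heq : ∀ t : ℝ, 0 ≤ t → Y t = y - lam * (∫ s in (0:ℝ)..t, psgn (Y s)) + W t)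
    (hu : ∀ j, u j ∈ Icc (0 : ℝ) 1) (ht : 0 ≤ t)
    (hL : Tendsto (fun ε : ℝ =>
        (4 * ε)⁻¹ * ∫ s in (0:ℝ)..t, (if |Y s| < ε then (1:ℝ) else 0))
      (nhdsWithin 0 (Ioi 0)) (nhds L)) :
    Tendsto (fun k => zE lam t (epsk k) u θ W Y) atTop
      (nhds (Complex.exp (Complex.I * ((∑ j, θ j * (Y (t * u j) - y) : ℝ) : ℂ)))) := by
  have hs : ∀ j, t * u j ∈ Icc 0 t := fun j =>
    ⟨mul_nonneg ht (hu j).1, mul_le_of_le_one_right ht (hu j).2⟩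
  refine (Complex.continuous_exp.tendsto _).comp (Tendsto.const_mul _
    ((Complex.continuous_ofReal.tendsto _).comp (tendsto_finsetSum _ fun j _ => ?_)))
  have a := (approx_tendsto hY hL (G := pE) (G0 := psgn)
    (fun e => (continuous_pE e).measurable) measurable_psgn abs_psgn_le
    (fun e he x => abs_pE_sub_psgn_le he x) (hs j)).comp epsk_tendsto
  have h := heq _ (hs j).1
  have e1 : Y (t * u j) - y = W (t * u j) - lam * ∫ s in (0:ℝ)..(t * u j), psgn (Y s) := by
    rw [h]; ring
  rw [e1]
  exact ((tendsto_const_nhds).sub (a.const_mul lam)).const_mul _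

variable {Ω' : Type*} {mΩ' : MeasurableSpace Ω'} {P Pstar : Measure Ω'}
  {F : ℝ → MeasurableSpace Ω'} {W Y L : ℝ → Ω' → ℝ}

lemma key [IsProbabilityMeasure P] [IsProbabilityMeasure Pstar] {lam y : ℝ}
    (S : Setup P Pstar F W Y lam y) (hLP : IsLocalTime P Y L)
    {ι : Type*} [Fintype ι] {u : ι → ℝ} (θ : ι → ℝ)
    (hu : ∀ j, u j ∈ Icc (0 : ℝ) 1) {t : ℝ} (ht : 0 ≤ t) :
    AEStronglyMeasurable (fun ω => mL lam y t (Y t ω) (L t ω)) P ∧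
    ∫⁻ ω, ENNReal.ofReal (mL lam y t (Y t ω) (L t ω) ^ 2) ∂P ≤
      ENNReal.ofReal (Real.exp (lam ^ 2 * t)) ∧
    ∫ ω, ((mL lam y t (Y t ω) (L t ω) : ℝ) : ℂ) *
        Complex.exp (Complex.I * ((∑ j, θ j * (Y (t * u j) ω - y) : ℝ) : ℂ)) ∂P =
      ∫ ω, Complex.exp (Complex.I * ((∑ j, θ j * (Y (t * u j) ω - y) : ℝ) : ℂ)) ∂Pstar := by
  have H := fun k => key_eps S θ hu ht (epsk_pos k)
  obtain ⟨c1, c2, c3⟩ := ui_lim (μ := P) (M := fun k ω => mE lam y t (epsk k) (fun s => Y s ω))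
    (Z := fun k ω => zE lam t (epsk k) u θ (fun s => W s ω) (fun s => Y s ω))
    (M' := fun ω => mL lam y t (Y t ω) (L t ω))
    (Z' := fun ω => Complex.exp (Complex.I * ((∑ j, θ j * (Y (t * u j) ω - y) : ℝ) : ℂ)))
    (fun k => (H k).1) (fun k => (H k).2.1)
    (fun k ω => (Real.exp_pos _).le) (fun k ω => norm_cexp_I _) (fun ω => (Real.exp_pos _).le)
    (fun ω => norm_cexp_I _) (Real.exp_pos _).le (fun k => (H k).2.2.1)
    (by
      filter_upwards [S.hYcont, hLP] with ω h1 h2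
      exact mE_tendsto (Y := fun s => Y s ω) h1 ht (h2 t ht))
    (by
      filter_upwards [S.hYcont, hLP, S.hYeq] with ω h1 h2 h3
      exact zE_tendsto (Y := fun s => Y s ω) (W := fun s => W s ω) h1 h3 hu ht (h2 t ht))
  refine ⟨c1, c2, tendsto_nhds_unique c3 ?_⟩
  simp only [(H _).2.2.2]
  exact tendsto_const_nhds

end Key3

section Final

variable {Ω' : Type*} {mΩ' : MeasurableSpace Ω'} {P Pstar : Measure Ω'}
  {F : ℝ → MeasurableSpace Ω'} {W Y L : ℝ → Ω' → ℝ}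

lemma meas_natSA (Y : ℝ → Ω' → ℝ) {s t : ℝ} (hs : s ∈ Icc 0 t) :
    Measurable[natSA Y t] (Y s) :=
  measurable_iff_comap_le.2 (le_iSup₂ (f := fun s (_ : s ∈ Icc (0 : ℝ) t) =>
    MeasurableSpace.comap (Y s) inferInstance) s hs)

lemma natSA_eq (Y : ℝ → Ω' → ℝ) (t : ℝ) :
    natSA Y t = MeasurableSpace.comap (fun ω (s : Icc (0 : ℝ) t) => Y s ω) MeasurableSpace.pi := by
  simp only [natSA, MeasurableSpace.pi, MeasurableSpace.comap_iSup, MeasurableSpace.comap_comp,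
    iSup_subtype, Function.comp_def]

/-- A `natSA`-measurable version of the local time. -/
def Ltil (Y : ℝ → Ω' → ℝ) (t : ℝ) (ω : Ω') : ℝ :=
  limsup (fun k : ℕ => limsup (fun n : ℕ =>
    ∑ i ∈ Finset.range n, phiE (epsk k) (Y (i * (t / n)) ω) * (t / n)) atTop / 2) atTop / 2

lemma meas_Ltil (Y : ℝ → Ω' → ℝ) {t : ℝ} (ht : 0 ≤ t) : Measurable[natSA Y t] (Ltil Y t) := by
  unfold Ltil
  refine Measurable.div_const (Measurable.limsup fun k => Measurable.div_const
    (Measurable.limsup fun n => Finset.measurable_sum _ fun i hi => ?_) _) _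
  refine Measurable.mul_const ((continuous_phiE _).measurable.comp (meas_natSA Y ?_)) _
  have hi : i < n := Finset.mem_range.1 hi
  have hn : (0 : ℝ) < n := by exact_mod_cast (Nat.zero_le i).trans_lt hi
  refine ⟨by positivity, ?_⟩
  have h1 : (i : ℝ) ≤ n := by exact_mod_cast hi.le
  calc (i : ℝ) * (t / n) ≤ n * (t / n) := by gcongr
    _ = t := by field_simp

lemma Ltil_eq {μ : Measure Ω'} (hc : ∀ᵐ ω ∂μ, Continuous fun t => Y t ω)
    (hL : IsLocalTime μ Y L) {t : ℝ} (ht : 0 ≤ t) : ∀ᵐ ω ∂μ, Ltil Y t ω = L t ω := by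
  filter_upwards [hc, hL] with ω h1 h2
  have hu : (1 : ℝ) ∈ Icc (0 : ℝ) 1 := ⟨zero_le_one, le_rfl⟩
  have r : ∀ k, limsup (fun n : ℕ =>
      ∑ i ∈ Finset.range n, phiE (epsk k) (Y (i * (t / n)) ω) * (t / n)) atTop =
      ∫ s in (0:ℝ)..t, phiE (epsk k) (Y s ω) := by
    intro k
    have := riemann_tendsto_one ((continuous_phiE (epsk k)).comp h1) ht hu
    simp only [Function.comp_def, one_mul, mul_one, Nat.floor_natCast] at this
    exact this.limsup_eq
  have r2 := (phi_tendsto h1 ht (h2 t ht)).comp epsk_tendsto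
  unfold Ltil
  simp only [r]
  have := r2.limsup_eq
  simp only [Function.comp_def] at this
  rw [this]
  ring

lemma meas_pair {β : Type*} [MeasurableSpace β] {m' : MeasurableSpace Ω'} {f : ℝ × ℝ → β}
    (hf : Measurable f) {a b : Ω' → ℝ} (ha : Measurable[m'] a) (hb : Measurable[m'] b) :
    Measurable[m'] (fun ω => f (a ω, b ω)) :=
  hf.comp (Measurable.prodMk ha hb)

lemma law_eq [IsProbabilityMeasure P] [IsProbabilityMeasure Pstar] {lam y : ℝ}
    (S : Setup P Pstar F W Y lam y) (hLP : IsLocalTime P Y L) {t : ℝ} (ht : 0 ≤ t)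
    {A : Set Ω'} (hA : MeasurableSet[natSA Y t] A) :
    P.withDensity (fun ω => ENNReal.ofReal (mL lam y t (Y t ω) (Ltil Y t ω))) A = Pstar A := by
  have hle : natSA Y t ≤ mΩ' := S.hstar.le t
  have hYm : ∀ s ∈ Icc (0 : ℝ) t, Measurable (Y s) := fun s hs => (meas_natSA Y hs).mono hle le_rfl
  have hLm : Measurable (Ltil Y t) := (meas_Ltil Y ht).mono hle le_rfl
  have hYt := hYm t ⟨ht, le_rfl⟩
  have hMm : Measurable (fun ω => mL lam y t (Y t ω) (Ltil Y t ω)) := by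
    unfold mL; fun_prop
  have hMe : (fun ω => mL lam y t (Y t ω) (Ltil Y t ω)) =ᵐ[P]
      (fun ω => mL lam y t (Y t ω) (L t ω)) := by
    filter_upwards [Ltil_eq S.hYcont hLP ht] with ω h
    rw [h]
  have K0 := key S hLP (ι := Fin 0) (u := fun _ => 0) (fun _ => 0) (by simp) ht
  have hIntg : Integrable (fun ω => mL lam y t (Y t ω) (Ltil Y t ω)) P :=
    (integrable_of_sq K0.1 K0.2.1).2.congr hMe.symm
  set Q := P.withDensity (fun ω => ENNReal.ofReal (mL lam y t (Y t ω) (Ltil Y t ω))) with hQ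
  have : IsFiniteMeasure Q := by
    refine isFiniteMeasure_withDensity ?_
    exact (hasFiniteIntegral_iff_ofReal (Eventually.of_forall fun ω => (Real.exp_pos _).le)).1
      hIntg.2 |>.ne
  set X : Ω' → (Icc (0 : ℝ) t → ℝ) := fun ω s => Y s ω with hX
  have hXm : Measurable X := measurable_pi_lambda _ fun s => hYm s s.2
  have hmap : Q.map X = Pstar.map X := by
    refine IsProjectiveLimit.unique (P := fun I => (Pstar.map X).map I.restrict) (fun I => ?_)
      (fun I => rfl)
    have hrm : Measurable (fun x : Icc (0 : ℝ) t → ℝ => I.restrict x) :=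
      Finset.measurable_restrict I
    change (Q.map X).map I.restrict = (Pstar.map X).map I.restrict
    rw [Measure.map_map hrm hXm, Measure.map_map hrm hXm]
    have hcm : Measurable ((fun x : Icc (0 : ℝ) t → ℝ => I.restrict x) ∘ X) := hrm.comp hXm
    have : IsFiniteMeasure (Q.map (I.restrict ∘ X)) := Measure.isFiniteMeasure_map _ _
    have : IsFiniteMeasure (Pstar.map (I.restrict ∘ X)) := Measure.isFiniteMeasure_map _ _
    refine Measure.ext_of_charFunDual ?_
    ext Λ
    rw [charFunDual_apply, charFunDual_apply]
    have hcont : Continuous (fun v : I → ℝ => Complex.exp ((Λ v : ℂ) * Complex.I)) := by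
      fun_prop
    rw [integral_map hcm.aemeasurable hcont.aestronglyMeasurable,
      integral_map hcm.aemeasurable hcont.aestronglyMeasurable]
    classical
    set θ : I → ℝ := fun j => Λ (fun i => if j = i then 1 else 0) with hθ
    set u : I → ℝ := fun j => (j : Icc (0 : ℝ) t) / t with hu
    have hu1 : ∀ j, u j ∈ Icc (0 : ℝ) 1 := fun j =>
      ⟨div_nonneg j.1.2.1 ht, div_le_one_of_le₀ j.1.2.2 ht⟩
    have htu : ∀ j, t * u j = (j : Icc (0 : ℝ) t) := by
      intro j
      simp only [hu]
      rcases ht.eq_or_lt with h | h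
      · have h1 := j.1.2.1
        have h2 := j.1.2.2
        have h3 : ((j : Icc (0 : ℝ) t) : ℝ) = 0 := le_antisymm (h2.trans h.symm.le) h1
        rw [h3, zero_div, mul_zero]
      · field_simp
    have hΛ : ∀ ω, Complex.exp ((Λ (I.restrict (X ω)) : ℂ) * Complex.I) =
        Complex.exp (Complex.I * ((∑ j, θ j * (Y (t * u j) ω - y) : ℝ) : ℂ)) *
          Complex.exp (Complex.I * ((∑ j, θ j * y : ℝ) : ℂ)) := by
      intro ω
      rw [← Complex.exp_add, ← mul_add, mul_comm, ← Complex.ofReal_add,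
        ← Finset.sum_add_distrib]
      have := LinearMap.pi_apply_eq_sum_univ (Λ : (I → ℝ) →ₗ[ℝ] ℝ) (I.restrict (X ω))
      have h2 : Λ (I.restrict (X ω)) = ∑ j, (θ j * (Y (t * u j) ω - y) + θ j * y) := by
        refine this.trans (Finset.sum_congr rfl fun j _ => ?_)
        rw [htu]
        simp only [smul_eq_mul, hX, Finset.restrict, hθ]
        simp only [ContinuousLinearMap.coe_coe]
        ring
      rw [h2]
    have K := (key S hLP θ hu1 ht).2.2
    simp only [Function.comp_apply, hΛ]
    rw [integral_mul_const, integral_mul_const, ← K, hQ,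
      integral_withDensity_eq_integral_toReal_smul hMm.ennreal_ofReal
        (Eventually.of_forall fun _ => ENNReal.ofReal_lt_top)]
    congr 1
    refine integral_congr_ae ?_
    filter_upwards [hMe] with ω h
    rw [ENNReal.toReal_ofReal (show 0 ≤ mL lam y t (Y t ω) (Ltil Y t ω) from (Real.exp_pos _).le),
      h, Complex.real_smul]
  rw [natSA_eq] at hA
  obtain ⟨B, hB, rfl⟩ := hA
  rw [← Measure.map_apply hXm hB, ← Measure.map_apply hXm hB, hmap]

lemma final [IsProbabilityMeasure P] [IsProbabilityMeasure Pstar] {lam y : ℝ}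
    (S : Setup P Pstar F W Y lam y) (hLP : IsLocalTime P Y L) (hLs : IsLocalTime Pstar Y L)
    {t : ℝ} (ht : 0 ≤ t) {A : Set Ω'} (hA : MeasurableSet[natSA Y t] A) :
    P A = ∫⁻ ω in A,
        ENNReal.ofReal
          (Real.exp (lam * (|y| - |Y t ω| + 2 * L t ω) - lam ^ 2 / 2 * t)) ∂Pstar := by
  have hle : natSA Y t ≤ mΩ' := S.hstar.le t
  have hAm : MeasurableSet A := hle A hA
  set g : Ω' → ENNReal := fun ω => ENNReal.ofReal
    (Real.exp (lam * (|y| - |Y t ω| + 2 * Ltil Y t ω) - lam ^ 2 / 2 * t)) with hg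
  have hYn := meas_natSA Y (s := t) (t := t) ⟨ht, le_rfl⟩
  have hLn := meas_Ltil Y ht
  have hgn : Measurable[natSA Y t] g := by
    have h1 : Measurable (fun p : ℝ × ℝ => ENNReal.ofReal
      (Real.exp (lam * (|y| - |p.1| + 2 * p.2) - lam ^ 2 / 2 * t))) := by fun_prop
    exact meas_pair h1 hYn hLn
  have hMm : Measurable (fun ω => mL lam y t (Y t ω) (Ltil Y t ω)) := by
    have h1 : Measurable (fun p : ℝ × ℝ => mL lam y t p.1 p.2) := by unfold mL; fun_prop
    exact meas_pair h1 (hYn.mono hle le_rfl) (hLn.mono hle le_rfl)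
  have hcs : ∀ᵐ ω ∂Pstar, Continuous fun t => Y t ω := by
    filter_upwards [S.hstar.cont] with ω h
    have h2 : Continuous fun t => (Y t ω - y) + y := h.add continuous_const
    simpa using h2
  set Q := P.withDensity (fun ω => ENNReal.ofReal (mL lam y t (Y t ω) (Ltil Y t ω))) with hQ
  have htr : Q.trim hle = Pstar.trim hle := by
    refine @Measure.ext _ (natSA Y t) _ _ fun s hs => ?_
    rw [trim_measurableSet_eq hle hs, trim_measurableSet_eq hle hs]
    exact law_eq S hLP ht hs
  have e1 : ∫⁻ ω in A, ENNReal.ofReal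
      (Real.exp (lam * (|y| - |Y t ω| + 2 * L t ω) - lam ^ 2 / 2 * t)) ∂Pstar =
      ∫⁻ ω in A, g ω ∂Pstar := by
    refine lintegral_congr_ae (ae_restrict_of_ae ?_)
    filter_upwards [Ltil_eq hcs hLs ht] with ω h
    rw [hg]
    simp only [h]
  have hgA : Measurable[natSA Y t] (A.indicator g) := hgn.indicator hA
  rw [e1, ← lintegral_indicator hAm, ← lintegral_trim hle hgA, ← htr, lintegral_trim hle hgA, hQ,
    lintegral_withDensity_eq_lintegral_mul _ hMm.ennreal_ofReal (hgA.mono hle le_rfl)]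
  have e2 : ((fun ω => ENNReal.ofReal (mL lam y t (Y t ω) (Ltil Y t ω))) * A.indicator g) =
      A.indicator (fun _ => (1 : ENNReal)) := by
    ext ω
    by_cases hω : ω ∈ A
    · simp only [Pi.mul_apply, indicator_of_mem hω, hg, mL]
      rw [← ENNReal.ofReal_mul (Real.exp_pos _).le, ← Real.exp_add]
      rw [show lam * (|Y t ω| - |y| - 2 * Ltil Y t ω) + lam ^ 2 / 2 * t +
        (lam * (|y| - |Y t ω| + 2 * Ltil Y t ω) - lam ^ 2 / 2 * t) = 0 by ring]
      simp
    · simp [indicator_of_notMem hω]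
  rw [e2, lintegral_indicator hAm]
  simp

end Final

/-- (5.1) of the paper. If `Y` solves
`Y(t) = y − λ∫₀ᵗ sgn(Y(s)) ds + W(t)` under `ℙ`, and `ℙ⋆` is the reference probability
measure under which `Y` is a standard Brownian motion started at `y`, then for every
`t ≥ 0` the Radon–Nikodým derivative of `ℙ` with respect to `ℙ⋆` on `𝔉^Y(t)` is
`exp{ λ(|y| − |Y(t)| + 2L^Y(t)) − λ²t/2 }`. -/
theorem girsanov_density_bangbang
    (lam y : ℝ) (hlam : 0 < lam)
    {Ω : Type*} [mΩ : MeasurableSpace Ω] (P Pstar : Measure Ω)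
    [IsProbabilityMeasure P] [IsProbabilityMeasure Pstar]
    (F : ℝ → MeasurableSpace Ω) (W Y L : ℝ → Ω → ℝ)
    (hW : IsBM P F W)
    (hYadp : ∀ t : ℝ, 0 ≤ t → MeasurableSpace.comap (Y t) inferInstance ≤ F t)
    (hYcont : ∀ᵐ ω ∂P, Continuous fun t => Y t ω)
    (hYeq : ∀ᵐ ω ∂P, ∀ t : ℝ, 0 ≤ t →
      Y t ω = y - lam * (∫ s in (0:ℝ)..t, psgn (Y s ω)) + W t ω)
    (hstar : IsBM Pstar (fun t => natSA Y t) (fun t ω => Y t ω - y))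
    (hLP : IsLocalTime P Y L) (hLstar : IsLocalTime Pstar Y L) :
    ∀ t : ℝ, 0 ≤ t → ∀ A : Set Ω, MeasurableSet[natSA Y t] A →
      P A = ∫⁻ ω in A,
        ENNReal.ofReal
          (Real.exp (lam * (|y| - |Y t ω| + 2 * L t ω) - lam ^ 2 / 2 * t)) ∂Pstar := by
  intro t ht A hA
  exact final (F := F) (W := W) ⟨hlam.le, hW, fun s hs => measurable_iff_comap_le.2 (hYadp s hs),
    hYcont, hYeq, hstar⟩ hLP hLstar ht hA

end SDEPaper
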